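/- arXiv:1105.6105 — 2 statements merged into one kernel-verified Lean document; each statement's English description precedes it below -/
import Mathlib

section
/- Let ω be a weight on ℝ^d (continuous, symmetric, nonnegative, submultiplicative), let μ be ω-moderate, and let Φ = (φ_1,…,φ_r) with each φ_i ∈ W^1_ω. If V^{p₀}_μ(Φ) is a closed subspace of L^{p₀}_μ and of W^{p₀}_μ for some p₀ ∈ [1,∞], then V^p_μ(Φ) is a closed subspace of L^p_μ and of W^p_μ for every p ∈ [1,∞]. -/
open MeasureTheory Filter Topology ENNReal Real Matrix

noncomputable section

variable {d : ℕ}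

/-- embedding of `ℤ^d` into `ℝ^d` -/
def zc (j : Fin d → ℤ) : Fin d → ℝ := fun i => (j i : ℝ)

/-- weighted `ℓ^p_ν` norm of a sequence on `ℤ^d` -/
def lpW (p : ℝ≥0∞) (ν : (Fin d → ℝ) → ℝ) (c : (Fin d → ℤ) → ℂ) : ℝ≥0∞ :=
  if p = ∞ then ⨆ j, (‖c j‖₊ : ℝ≥0∞) * ENNReal.ofReal (ν (zc j))
  else (∑' j, ((‖c j‖₊ : ℝ≥0∞) * ENNReal.ofReal (ν (zc j))) ^ p.toReal) ^ (1 / p.toReal)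

/-- weighted `L^p_ν` norm -/
def LpW (p : ℝ≥0∞) (ν : (Fin d → ℝ) → ℝ) (f : (Fin d → ℝ) → ℂ) : ℝ≥0∞ :=
  eLpNorm (fun x => ν x • f x) p volume

/-- the unit cube `[0,1]^d` -/
def cube : Set (Fin d → ℝ) := Set.Icc 0 1

/-- local essential supremum of `|f|` on `j + [0,1]^d` -/
def amal (f : (Fin d → ℝ) → ℂ) (j : Fin d → ℤ) : ℝ≥0∞ :=
  essSup (fun x => (‖f (x + zc j)‖₊ : ℝ≥0∞)) (volume.restrict cube)

/-- Wiener amalgam norm `W^p_ν` -/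
def WW (p : ℝ≥0∞) (ν : (Fin d → ℝ) → ℝ) (f : (Fin d → ℝ) → ℂ) : ℝ≥0∞ :=
  if p = ∞ then ⨆ j, amal f j * ENNReal.ofReal (ν (zc j))
  else (∑' j, (amal f j * ENNReal.ofReal (ν (zc j))) ^ p.toReal) ^ (1 / p.toReal)

/-- the norm of `𝓛^p_ν` -/
def curlyL (p : ℝ≥0∞) (ν : (Fin d → ℝ) → ℝ) (f : (Fin d → ℝ) → ℂ) : ℝ≥0∞ :=
  if p = ∞ then
    essSup (fun x => ∑' j, (‖f (x + zc j)‖₊ : ℝ≥0∞) * ENNReal.ofReal (ν (x + zc j)))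
      (volume.restrict cube)
  else (∫⁻ x in cube,
      (∑' j, (‖f (x + zc j)‖₊ : ℝ≥0∞) * ENNReal.ofReal (ν (x + zc j))) ^ p.toReal) ^ (1 / p.toReal)

/-- a weight: continuous, symmetric, nonnegative, submultiplicative -/
def IsWeight (ω : (Fin d → ℝ) → ℝ) : Prop :=
  Continuous ω ∧ (∀ x, ω (-x) = ω x) ∧ (∀ x, 0 ≤ ω x) ∧ ∀ x y, ω (x + y) ≤ ω x * ω y

/-- `μ` is an `ω`-moderate weight -/
def IsModerate (ω μ : (Fin d → ℝ) → ℝ) : Prop :=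
  (∀ x, 0 ≤ μ x) ∧ ∃ C₀ > 0, ∀ x y, μ (x + y) ≤ C₀ * ω x * μ y

/-- semi-convolution of a function and a sequence -/
def semiConv (f : (Fin d → ℝ) → ℂ) (c : (Fin d → ℤ) → ℂ) : (Fin d → ℝ) → ℂ :=
  fun x => ∑' j, c j * f (x - zc j)

/-- Fourier transform `φ̂(ξ) = ∫ φ(x) e^{-i x·ξ} dx` -/
def FT (φ : (Fin d → ℝ) → ℂ) (ξ : Fin d → ℝ) : ℂ :=
  ∫ x : Fin d → ℝ, φ x * Complex.exp (-(Complex.I * (∑ i, (x i : ℂ) * (ξ i : ℂ))))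

/-- the Gram matrix `[Φ̂,Φ̂](ξ)` -/
def Gram {r : ℕ} (Φ : Fin r → (Fin d → ℝ) → ℂ) (ξ : Fin d → ℝ) : Matrix (Fin r) (Fin r) ℂ :=
  Matrix.of fun i i' =>
    ∑' k : Fin d → ℤ, FT (Φ i) (ξ + (2 * π) • zc k) * star (FT (Φ i') (ξ + (2 * π) • zc k))

/-- the dimension of the span of a family of vectors in `ℂ^r` -/
def rankSpan {r : ℕ} (v : (Fin d → ℤ) → (Fin r → ℂ)) : ℕ :=
  Module.finrank ℂ (Submodule.span ℂ (Set.range v))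

/-- the synthesis operator `S_Φ` -/
def SynOp {r : ℕ} (Φ : Fin r → (Fin d → ℝ) → ℂ) (c : Fin r → (Fin d → ℤ) → ℂ) :
    (Fin d → ℝ) → ℂ :=
  fun x => ∑ i, ∑' j, c i j * Φ i (x - zc j)

/-- the weighted shift-invariant space `V^p_μ(Φ)` -/
def VSI {r : ℕ} (p : ℝ≥0∞) (μ : (Fin d → ℝ) → ℝ) (Φ : Fin r → (Fin d → ℝ) → ℂ) :
    Set ((Fin d → ℝ) → ℂ) :=
  {f | AEStronglyMeasurable f volume ∧ LpW p μ f < ∞ ∧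
    ∃ c : Fin r → (Fin d → ℤ) → ℂ, (∀ i, lpW p μ (c i) < ∞) ∧ f =ᵐ[volume] SynOp Φ c}

/-- `ℓ^p_μ`-stability of the synthesis operator -/
def Stable {r : ℕ} (p : ℝ≥0∞) (μ : (Fin d → ℝ) → ℝ) (Φ : Fin r → (Fin d → ℝ) → ℂ) : Prop :=
  ∃ C : ℝ≥0∞, 0 < C ∧ C < ∞ ∧ ∀ c : Fin r → (Fin d → ℤ) → ℂ, (∀ i, lpW p μ (c i) < ∞) →
    C⁻¹ * (∑ i, lpW p μ (c i)) ≤ LpW p μ (SynOp Φ c) ∧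
      LpW p μ (SynOp Φ c) ≤ C * ∑ i, lpW p μ (c i)

/-- `{φ_i(·-j)}` is a `p`-frame for `V^p_μ(Φ)` -/
def PFrame {r : ℕ} (p : ℝ≥0∞) (μ : (Fin d → ℝ) → ℝ) (Φ : Fin r → (Fin d → ℝ) → ℂ) : Prop :=
  ∃ C : ℝ≥0∞, 0 < C ∧ C < ∞ ∧ ∀ f ∈ VSI p μ Φ,
    C⁻¹ * LpW p μ f ≤ ∑ i, lpW p μ (fun j => ∫ x, f x * Φ i (x - zc j)) ∧
      ∑ i, lpW p μ (fun j => ∫ x, f x * Φ i (x - zc j)) ≤ C * LpW p μ f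

/-- `V^p_μ(Φ)` is closed in `L^p_μ` -/
def VClosedL {r : ℕ} (p : ℝ≥0∞) (μ : (Fin d → ℝ) → ℝ) (Φ : Fin r → (Fin d → ℝ) → ℂ) : Prop :=
  ∀ f : (Fin d → ℝ) → ℂ, AEStronglyMeasurable f volume → LpW p μ f < ∞ →
    ∀ F : ℕ → (Fin d → ℝ) → ℂ, (∀ n, F n ∈ VSI p μ Φ) →
      Tendsto (fun n => LpW p μ (f - F n)) atTop (𝓝 0) → f ∈ VSI p μ Φ

/-- `V^p_μ(Φ)` is closed in `W^p_μ` -/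
def VClosedW {r : ℕ} (p : ℝ≥0∞) (μ : (Fin d → ℝ) → ℝ) (Φ : Fin r → (Fin d → ℝ) → ℂ) : Prop :=
  ∀ f : (Fin d → ℝ) → ℂ, AEStronglyMeasurable f volume → WW p μ f < ∞ →
    ∀ F : ℕ → (Fin d → ℝ) → ℂ, (∀ n, F n ∈ VSI p μ Φ) →
      Tendsto (fun n => WW p μ (f - F n)) atTop (𝓝 0) → f ∈ VSI p μ Φ

end

open MeasureTheory Filter Topology ENNReal Real Matrix

namespace ShiftInvariant

/-! ### The `ℓ^p` norm of families of extended nonnegative numbers -/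

/-- The `ℓ^p` norm of a family in `[0, ∞]`. -/
noncomputable def lq {ι : Type*} (p : ℝ≥0∞) (a : ι → ℝ≥0∞) : ℝ≥0∞ :=
  if p = ∞ then ⨆ j, a j else (∑' j, a j ^ p.toReal) ^ (1 / p.toReal)

section lq

variable {ι κ : Type*} {p q : ℝ≥0∞} {a b : ι → ℝ≥0∞}

theorem lq_top (a : ι → ℝ≥0∞) : lq ∞ a = ⨆ j, a j := by simp [lq]

theorem lq_of_ne_top (hp : p ≠ ∞) (a : ι → ℝ≥0∞) :
    lq p a = (∑' j, a j ^ p.toReal) ^ (1 / p.toReal) := by simp [lq, hp]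

theorem one_le_toReal_of_ne_top (hp1 : 1 ≤ p) (hp : p ≠ ∞) : 1 ≤ p.toReal := by
  rw [← ENNReal.toReal_one]
  exact ENNReal.toReal_mono hp hp1

theorem lq_le_iff (hp1 : 1 ≤ p) (hp : p ≠ ∞) {M : ℝ≥0∞} :
    lq p a ≤ M ↔ ∀ s : Finset ι, ∑ j ∈ s, a j ^ p.toReal ≤ M ^ p.toReal := by
  have h0 : 0 < p.toReal := zero_lt_one.trans_le (one_le_toReal_of_ne_top hp1 hp)
  rw [lq_of_ne_top hp, one_div, ENNReal.rpow_inv_le_iff h0, ENNReal.tsum_eq_iSup_sum, iSup_le_iff]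

theorem lq_mono (p : ℝ≥0∞) (h : ∀ j, a j ≤ b j) : lq p a ≤ lq p b := by
  unfold lq
  split_ifs
  · exact iSup_mono h
  · gcongr with j
    exact h j

theorem le_lq (hp1 : 1 ≤ p) (a : ι → ℝ≥0∞) (j : ι) : a j ≤ lq p a := by
  by_cases hp : p = ∞
  · rw [hp, lq_top]
    exact le_iSup a j
  · have h0 : 0 < p.toReal := zero_lt_one.trans_le (one_le_toReal_of_ne_top hp1 hp)
    have := (lq_le_iff (a := a) hp1 hp).1 le_rfl {j}
    rw [Finset.sum_singleton] at this
    exact (ENNReal.rpow_le_rpow_iff h0).1 this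

theorem lq_le_of_tendsto (hp1 : 1 ≤ p) {l : Filter κ} [l.NeBot] {u : κ → ι → ℝ≥0∞} {M : ℝ≥0∞}
    (hu : ∀ j, Tendsto (fun i => u i j) l (𝓝 (a j))) (hM : ∀ᶠ i in l, lq p (u i) ≤ M) :
    lq p a ≤ M := by
  by_cases hp : p = ∞
  · rw [hp, lq_top]
    refine iSup_le fun j => le_of_tendsto (hu j) (hM.mono fun i hi => (le_lq hp1 _ j).trans hi)
  · rw [lq_le_iff hp1 hp]
    intro s
    refine le_of_tendsto (tendsto_finsetSum s fun j _ =>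
      ((ENNReal.continuous_rpow_const (y := p.toReal)).tendsto _).comp (hu j))
      (hM.mono fun i hi => ?_)
    exact (lq_le_iff hp1 hp).1 hi s

theorem lq_add_le (hp1 : 1 ≤ p) (a b : ι → ℝ≥0∞) :
    lq p (fun j => a j + b j) ≤ lq p a + lq p b := by
  by_cases hp : p = ∞
  · subst hp
    rw [lq_top]
    exact iSup_le fun j => add_le_add (le_lq le_top a j) (le_lq le_top b j)
  · have h1 := one_le_toReal_of_ne_top hp1 hp
    have h0 : 0 < p.toReal := zero_lt_one.trans_le h1
    rw [lq_le_iff hp1 hp]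
    intro s
    have := ENNReal.Lp_add_le s a b h1
    rw [one_div, ENNReal.rpow_inv_le_iff h0] at this
    refine this.trans ?_
    gcongr
    · rw [ENNReal.rpow_inv_le_iff h0]
      exact (lq_le_iff hp1 hp).1 le_rfl s
    · rw [ENNReal.rpow_inv_le_iff h0]
      exact (lq_le_iff hp1 hp).1 le_rfl s

theorem lq_zero (hp1 : 1 ≤ p) : lq p (fun _ : ι => 0) = 0 := by
  by_cases hp : p = ∞
  · simp [hp, lq_top]
  · have h0 : 0 < p.toReal := zero_lt_one.trans_le (one_le_toReal_of_ne_top hp1 hp)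
    simp [lq_of_ne_top hp, h0]

theorem lq_finset_sum_le (hp1 : 1 ≤ p) (s : Finset κ) (u : κ → ι → ℝ≥0∞) :
    lq p (fun j => ∑ i ∈ s, u i j) ≤ ∑ i ∈ s, lq p (u i) := by
  classical
  induction s using Finset.induction_on with
  | empty => simp [lq_zero hp1]
  | insert i s hi ih =>
    simp only [Finset.sum_insert hi]
    exact (lq_add_le hp1 _ _).trans (add_le_add le_rfl ih)

theorem lq_tsum_le (hp1 : 1 ≤ p) (u : κ → ι → ℝ≥0∞) :
    lq p (fun j => ∑' i, u i j) ≤ ∑' i, lq p (u i) :=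
  lq_le_of_tendsto hp1 (l := atTop) (u := fun s : Finset κ => fun j => ∑ i ∈ s, u i j)
    (fun _ => ENNReal.summable.hasSum)
    (Eventually.of_forall fun s => (lq_finset_sum_le hp1 s u).trans (ENNReal.sum_le_tsum s))

theorem lq_const_mul (hp1 : 1 ≤ p) (c : ℝ≥0∞) (a : ι → ℝ≥0∞) :
    lq p (fun j => c * a j) = c * lq p a := by
  by_cases hp : p = ∞
  · simp [hp, lq_top, ENNReal.mul_iSup]
  · have h0 : 0 < p.toReal := zero_lt_one.trans_le (one_le_toReal_of_ne_top hp1 hp)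
    simp_rw [lq_of_ne_top hp, ENNReal.mul_rpow_of_nonneg _ _ h0.le, ENNReal.tsum_mul_left]
    rw [ENNReal.mul_rpow_of_nonneg _ _ (by positivity), ← ENNReal.rpow_mul, mul_one_div_cancel h0.ne',
      ENNReal.rpow_one]

theorem lq_comp_equiv (p : ℝ≥0∞) (e : κ ≃ ι) (a : ι → ℝ≥0∞) : lq p (fun j => a (e j)) = lq p a := by
  unfold lq
  split_ifs
  · exact e.iSup_comp (g := a)
  · rw [e.tsum_eq fun j => a j ^ p.toReal]

theorem lq_le_tsum (hp1 : 1 ≤ p) (a : ι → ℝ≥0∞) : lq p a ≤ ∑' j, a j := by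
  classical
  have h : a = fun j => ∑' i, if i = j then a i else 0 := by
    ext j
    rw [tsum_eq_single j (by simp +contextual)]
    simp
  conv_lhs => rw [h]
  refine (lq_tsum_le hp1 _).trans (ENNReal.tsum_le_tsum fun i => ?_)
  by_cases hp : p = ∞
  · rw [hp, lq_top]
    refine iSup_le fun j => ?_
    split_ifs <;> simp
  · have h0 : 0 < p.toReal := zero_lt_one.trans_le (one_le_toReal_of_ne_top hp1 hp)
    rw [lq_of_ne_top hp, tsum_eq_single i]
    · simp [← ENNReal.rpow_mul, h0.ne']
    · intro j hj
      simp [hj.symm, h0]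

/-- The `ℓ^p` norms of the restrictions of a family to the fibres of `blk`. -/
noncomputable def lqFiber (p : ℝ≥0∞) (blk : ι → κ) (a : ι → ℝ≥0∞) (m : κ) : ℝ≥0∞ :=
  open Classical in lq p (fun k => if blk k = m then a k else 0)

theorem lq_lqFiber (hp1 : 1 ≤ p) (blk : ι → κ) (a : ι → ℝ≥0∞) :
    lq p (lqFiber p blk a) = lq p a := by
  classical
  by_cases hp : p = ∞
  · subst hp
    simp only [lqFiber, lq_top]
    rw [iSup_comm]
    refine iSup_congr fun k => ?_
    refine le_antisymm (iSup_le fun m => ?_) ?_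
    · split_ifs <;> simp
    · exact le_iSup_of_le (blk k) (by simp)
  · have h0 : 0 < p.toReal := zero_lt_one.trans_le (one_le_toReal_of_ne_top hp1 hp)
    simp only [lqFiber, lq_of_ne_top hp]
    congr 1
    simp_rw [← ENNReal.rpow_mul, one_div, inv_mul_cancel₀ h0.ne', ENNReal.rpow_one]
    rw [ENNReal.tsum_comm]
    refine tsum_congr fun k => ?_
    rw [tsum_eq_single (blk k)]
    · simp
    · intro m hm
      simp [hm.symm, h0]

theorem lqFiber_le_lq (p : ℝ≥0∞) (blk : ι → κ) {m : κ} (h : ∀ k, blk k = m → a k ≤ b k) :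
    lqFiber p blk a m ≤ lq p b := by
  classical
  refine lq_mono p fun k => ?_
  split_ifs with hk
  · exact h k hk
  · exact zero_le

theorem lqFiber_mono (p : ℝ≥0∞) (blk : ι → κ) (h : ∀ k, a k ≤ b k) (m : κ) :
    lqFiber p blk a m ≤ lqFiber p blk b m := by
  classical
  refine lq_mono p fun k => ?_
  split_ifs
  · exact h k
  · exact le_rfl

theorem le_lqFiber (hp1 : 1 ≤ p) (blk : ι → κ) (a : ι → ℝ≥0∞) (k : ι) :
    a k ≤ lqFiber p blk a (blk k) := by
  classical
  simpa [lqFiber] using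
    le_lq hp1 (fun i => if blk i = blk k then a i else 0) k

theorem lqFiber_tsum_le {τ : Type*} (hp1 : 1 ≤ p) (blk : ι → κ) (u : τ → ι → ℝ≥0∞) (m : κ) :
    lqFiber p blk (fun k => ∑' i, u i k) m ≤ ∑' i, lqFiber p blk (u i) m := by
  classical
  refine le_trans (lq_mono p fun k => ?_)
    (lq_tsum_le hp1 fun i k => if blk k = m then u i k else 0)
  split_ifs <;> simp

theorem lqFiber_const_mul (hp1 : 1 ≤ p) (blk : ι → κ) (c : ℝ≥0∞) (a : ι → ℝ≥0∞) (m : κ) :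
    lqFiber p blk (fun k => c * a k) m = c * lqFiber p blk a m := by
  classical
  unfold lqFiber
  rw [← lq_const_mul hp1]
  congr 1
  ext k
  split_ifs <;> simp

theorem lqFiber_top_le (hp1 : 1 ≤ p) (blk : ι → κ) (a : ι → ℝ≥0∞) (m : κ) :
    lqFiber ∞ blk a m ≤ lqFiber p blk a m := by
  unfold lqFiber
  rw [lq_top]
  exact iSup_le fun k => le_lq hp1 _ k

theorem lqFiber_le_card_mul (hp1 : 1 ≤ p) (blk : ι → κ) (a : ι → ℝ≥0∞) (m : κ) (s : Finset ι)
    (hs : ∀ k, blk k = m → k ∈ s) : lqFiber p blk a m ≤ s.card * lqFiber ∞ blk a m := by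
  classical
  refine (lq_le_tsum hp1 _).trans ?_
  rw [tsum_eq_sum (s := s) fun k hk => if_neg fun h => hk (hs k h), ← nsmul_eq_mul]
  refine Finset.sum_le_card_nsmul _ _ _ fun k _ => ?_
  unfold lqFiber
  exact le_lq le_top (fun k => if blk k = m then a k else 0) k

end lq

/-! ### Shift-quasi-invariant norms on families -/

/-- Monotone, positively homogeneous, countably subadditive functionals `n` on families indexed by
an additive group for which shifts have norm at most `K`. -/
structure GoodNorm {ι : Type} [AddCommGroup ι] (n : (ι → ℝ≥0∞) → ℝ≥0∞) (K : ℝ≥0∞) : Prop where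
  mono : ∀ {a b : ι → ℝ≥0∞}, (∀ j, a j ≤ b j) → n a ≤ n b
  const_mul : ∀ (c : ℝ≥0∞) (a : ι → ℝ≥0∞), n (fun j => c * a j) ≤ c * n a
  tsum : ∀ {κ : Type} (u : κ → ι → ℝ≥0∞), n (fun j => ∑' i, u i j) ≤ ∑' i, n (u i)
  shift : ∀ (a : ι → ℝ≥0∞) (l : ι), n (fun j => a (j + l)) ≤ K * n a

/-- Convolution of families on an additive group. -/
noncomputable def conv {ι : Type} [AddCommGroup ι] (h a : ι → ℝ≥0∞) (j : ι) : ℝ≥0∞ :=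
  ∑' k, h (j - k) * a k

section GoodNorm

variable {ι : Type} [AddCommGroup ι] {n : (ι → ℝ≥0∞) → ℝ≥0∞} {K : ℝ≥0∞}

theorem GoodNorm.add (hn : GoodNorm n K) (a b : ι → ℝ≥0∞) :
    n (fun j => a j + b j) ≤ n a + n b := by
  have := hn.tsum (fun i : Bool => if i then a else b)
  simpa [tsum_fintype] using this

theorem GoodNorm.sum (hn : GoodNorm n K) {κ : Type} (s : Finset κ) (u : κ → ι → ℝ≥0∞) :
    n (fun j => ∑ i ∈ s, u i j) ≤ ∑ i ∈ s, n (u i) := by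
  have := hn.tsum (fun i : s => u i)
  simp only [Finset.tsum_subtype s (fun i => n (u i))] at this
  refine le_trans (hn.mono fun j => ?_) this
  rw [Finset.tsum_subtype s (fun i => u i j)]

theorem GoodNorm.sum_shift (hn : GoodNorm n K) (D : Finset ι) (a : ι → ℝ≥0∞) :
    n (fun j => ∑ δ ∈ D, a (j + δ)) ≤ D.card * K * n a := by
  refine (hn.sum D fun δ j => a (j + δ)).trans ?_
  refine (Finset.sum_le_card_nsmul _ _ _ fun δ _ => hn.shift a δ).trans ?_
  rw [nsmul_eq_mul, mul_assoc]

theorem GoodNorm.sum_shift_sub (hn : GoodNorm n K) (D : Finset ι) (a : ι → ℝ≥0∞) :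
    n (fun j => ∑ δ ∈ D, a (j - δ)) ≤ D.card * K * n a := by
  refine (hn.sum D fun δ j => a (j - δ)).trans ?_
  refine (Finset.sum_le_card_nsmul _ _ (K * n a) fun δ _ => ?_).trans ?_
  · simpa [sub_eq_add_neg] using hn.shift a (-δ)
  · rw [nsmul_eq_mul, mul_assoc]

theorem GoodNorm.conv_le (hn : GoodNorm n K) (h a : ι → ℝ≥0∞) :
    n (conv h a) ≤ K * (∑' l, h l) * n a := by
  have key : conv h a = fun j => ∑' l, h l * a (j - l) := by
    ext j
    rw [conv, ← (Equiv.subLeft j).tsum_eq]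
    simp
  rw [key]
  refine (hn.tsum fun l j => h l * a (j - l)).trans ?_
  rw [mul_comm K, mul_assoc, ← ENNReal.tsum_mul_right]
  refine ENNReal.tsum_le_tsum fun l => ?_
  refine (hn.const_mul _ _).trans ?_
  gcongr
  simpa [sub_eq_add_neg] using hn.shift a (-l)

theorem goodNorm_lq {p : ℝ≥0∞} (hp : 1 ≤ p) : GoodNorm (lq p : (ι → ℝ≥0∞) → ℝ≥0∞) 1 where
  mono := lq_mono p
  const_mul c a := (lq_const_mul hp c a).le
  tsum := lq_tsum_le hp
  shift a l := by
    rw [one_mul]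
    exact (lq_comp_equiv p (Equiv.addRight l) a).le

theorem goodNorm_iSup {τ : Type*} {n : τ → (ι → ℝ≥0∞) → ℝ≥0∞}
    (hn : ∀ t, GoodNorm (n t) K) : GoodNorm (fun a => ⨆ t, n t a) K where
  mono h := iSup_mono fun t => (hn t).mono h
  const_mul c a := by
    rw [ENNReal.mul_iSup]
    exact iSup_mono fun t => (hn t).const_mul c a
  tsum u := iSup_le fun t => ((hn t).tsum u).trans
    (ENNReal.tsum_le_tsum fun i => le_iSup (fun t => n t (u i)) t)
  shift a l := by
    rw [ENNReal.mul_iSup]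
    exact iSup_mono fun t => (hn t).shift a l

theorem goodNorm_max {n₁ n₂ : (ι → ℝ≥0∞) → ℝ≥0∞} (h₁ : GoodNorm n₁ K) (h₂ : GoodNorm n₂ K) :
    GoodNorm (fun a => max (n₁ a) (n₂ a)) K := by
  have := goodNorm_iSup (n := fun t : Bool => if t then n₁ else n₂) (K := K) (by
    rintro (_ | _) <;> simpa)
  convert this using 2 with a
  rw [iSup_bool_eq]
  simp

theorem goodNorm_mul (c : ℝ≥0∞) (hn : GoodNorm n K) : GoodNorm (fun a => c * n a) K where
  mono h := by
    gcongr
    exact hn.mono h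
  const_mul e a := by
    rw [mul_left_comm]
    gcongr
    exact hn.const_mul e a
  tsum u := by
    rw [ENNReal.tsum_mul_left]
    gcongr
    exact hn.tsum u
  shift a l := by
    rw [mul_left_comm]
    gcongr
    exact hn.shift a l

/-- The supremum of the `ℓ^q` norms over all translates of a finite window `S`. -/
noncomputable def windowNorm (q : ℝ≥0∞) (S : Finset ι) (a : ι → ℝ≥0∞) : ℝ≥0∞ :=
  open Classical in ⨆ z : ι, lq q (fun k => if k - z ∈ S then a k else 0)

theorem goodNorm_windowNorm {q : ℝ≥0∞} (hq : 1 ≤ q) (S : Finset ι) :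
    GoodNorm (windowNorm q S : (ι → ℝ≥0∞) → ℝ≥0∞) 1 where
  mono h := iSup_mono fun z => lq_mono q fun k => by
    split_ifs
    · exact h k
    · exact le_rfl
  const_mul c a := by
    unfold windowNorm
    rw [ENNReal.mul_iSup]
    refine iSup_mono fun z => ?_
    rw [← lq_const_mul hq]
    refine lq_mono q fun k => ?_
    split_ifs <;> simp
  tsum u := by
    classical
    refine iSup_le fun z => ?_
    refine le_trans ?_ (ENNReal.tsum_le_tsum fun i =>
      le_iSup (fun z => lq q (fun k => if k - z ∈ S then u i k else 0)) z)
    refine le_trans (lq_mono q fun k => ?_) (lq_tsum_le hq _)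
    split_ifs <;> simp
  shift a l := by
    classical
    rw [one_mul]
    refine iSup_le fun z => le_iSup_of_le (z + l) ?_
    refine le_trans (lq_mono q fun k => ?_) (lq_comp_equiv q (Equiv.addRight l) _).le
    simp

theorem lq_top_le_windowNorm {q : ℝ≥0∞} (hq : 1 ≤ q) {S : Finset ι} (hS : 0 ∈ S)
    (a : ι → ℝ≥0∞) : lq ∞ a ≤ windowNorm q S a := by
  classical
  rw [lq_top]
  refine iSup_le fun k => le_iSup_of_le k ?_
  simpa [hS] using le_lq hq (fun i => if i - k ∈ S then a i else 0) k

theorem windowNorm_singleton_le {q : ℝ≥0∞} (hq : 1 ≤ q) (x : ι) (a : ι → ℝ≥0∞) :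
    windowNorm q {x} a ≤ lq ∞ a := by
  classical
  refine iSup_le fun z => (lq_le_tsum hq _).trans ?_
  rw [tsum_eq_single (x + z)]
  · split_ifs
    · exact le_lq le_top a _
    · exact zero_le
  · intro k hk
    rw [if_neg]
    rw [Finset.mem_singleton]
    rintro rfl
    exact hk (by abel)

theorem windowNorm_mono (q : ℝ≥0∞) {S S' : Finset ι} (h : S ⊆ S') (a : ι → ℝ≥0∞) :
    windowNorm q S a ≤ windowNorm q S' a := by
  classical
  refine iSup_mono fun z => lq_mono q fun k => ?_
  split_ifs with h1 h2
  · exact le_rfl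
  · exact absurd (h h1) h2
  · exact zero_le
  · exact le_rfl

open Classical in
theorem windowNorm_insert_le {q : ℝ≥0∞} (hq : 1 ≤ q) {S : Finset ι} (hS : 0 ∈ S)
    (x : ι) (a : ι → ℝ≥0∞) : windowNorm q (insert x S) a ≤ 2 * windowNorm q S a := by
  rw [two_mul]
  refine le_trans ?_ (add_le_add ((windowNorm_singleton_le hq x a).trans
    (lq_top_le_windowNorm hq hS a)) le_rfl)
  refine iSup_le fun z => le_trans ?_ (add_le_add
    (le_iSup (fun z => lq q (fun k => if k - z ∈ ({x} : Finset ι) then a k else 0)) z)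
    (le_iSup (fun z => lq q (fun k => if k - z ∈ S then a k else 0)) z))
  refine le_trans (lq_mono q fun k => ?_) (lq_add_le hq _ _)
  by_cases h1 : k - z ∈ S <;> by_cases h2 : k - z = x <;> simp [h1, h2]

theorem windowNorm_le_lq (q : ℝ≥0∞) (S : Finset ι) (a : ι → ℝ≥0∞) :
    windowNorm q S a ≤ lq q a := by
  refine iSup_le fun z => lq_mono q fun k => ?_
  split_ifs
  · exact le_rfl
  · exact zero_le

end GoodNorm

/-! ### Synthesis with matrices of operators having off-diagonal decay -/

/-- The operator with matrix `B`. -/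
noncomputable def syn {ι : Type} {F E : Type*} [NormedAddCommGroup F] [NormedSpace ℝ F]
    [NormedAddCommGroup E] [NormedSpace ℝ E] (B : ι → ι → F →L[ℝ] E) (x : ι → F) (j : ι) : E :=
  ∑' k, B j k (x k)

/-- Every `x` of finite norm can be replaced by some `s` having the same image under `syn B`,
with norm at most `κ` times the norm of the image. -/
def Solves {ι : Type} {F E : Type*} [NormedAddCommGroup F] [NormedSpace ℝ F]
    [NormedAddCommGroup E] [NormedSpace ℝ E] (B : ι → ι → F →L[ℝ] E)
    (n : (ι → ℝ≥0∞) → ℝ≥0∞) (κ : ℝ≥0∞) : Prop :=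
  ∀ x : ι → F, n (fun k => ‖x k‖ₑ) < ∞ → ∃ s : ι → F, (∀ j, syn B s j = syn B x j) ∧
    n (fun k => ‖s k‖ₑ) ≤ κ * n (fun j => ‖syn B x j‖ₑ)

theorem syn_smul {ι : Type} {F E : Type*} [NormedAddCommGroup F] [NormedSpace ℝ F]
    [NormedAddCommGroup E] [NormedSpace ℝ E] {B : ι → ι → F →L[ℝ] E} (c : ℝ) (x : ι → F) (j : ι) :
    syn B (fun k => c • x k) j = c • syn B x j := by
  simp only [syn, map_smul]
  exact tsum_const_smul'' c

section syn

variable {ι : Type} [AddCommGroup ι] {F E : Type*} [NormedAddCommGroup F] [NormedSpace ℝ F]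
  [NormedAddCommGroup E] [NormedSpace ℝ E] {B : ι → ι → F →L[ℝ] E} {h : ι → ℝ≥0∞}

theorem enorm_syn_le (hB : ∀ j k v, ‖B j k v‖ₑ ≤ h (j - k) * ‖v‖ₑ) (x : ι → F) (j : ι) :
    ‖syn B x j‖ₑ ≤ conv h (fun k => ‖x k‖ₑ) j :=
  enorm_tsum_le_tsum_enorm.trans (ENNReal.tsum_le_tsum fun k => hB j k (x k))

variable [CompleteSpace E]

theorem summable_syn (hB : ∀ j k v, ‖B j k v‖ₑ ≤ h (j - k) * ‖v‖ₑ) (hh : ∑' l, h l ≠ ∞)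
    {x : ι → F} {M : ℝ≥0∞} (hM : M ≠ ∞) (hx : ∀ k, ‖x k‖ₑ ≤ M) (j : ι) :
    Summable fun k => B j k (x k) := by
  refine Summable.of_enorm (ne_top_of_le_ne_top (ENNReal.mul_ne_top hh hM) ?_)
  rw [← (Equiv.subLeft j).tsum_eq h, ← ENNReal.tsum_mul_right]
  refine ENNReal.tsum_le_tsum fun k => (hB j k (x k)).trans ?_
  simp only [Equiv.subLeft_apply]
  gcongr
  exact hx k

theorem syn_sub (hB : ∀ j k v, ‖B j k v‖ₑ ≤ h (j - k) * ‖v‖ₑ) (hh : ∑' l, h l ≠ ∞)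
    {x y : ι → F} {M M' : ℝ≥0∞} (hM : M ≠ ∞) (hx : ∀ k, ‖x k‖ₑ ≤ M) (hM' : M' ≠ ∞)
    (hy : ∀ k, ‖y k‖ₑ ≤ M') (j : ι) :
    syn B (fun k => x k - y k) j = syn B x j - syn B y j := by
  simp only [syn, map_sub]
  exact (summable_syn hB hh hM hx j).tsum_sub (summable_syn hB hh hM' hy j)

theorem syn_add (hB : ∀ j k v, ‖B j k v‖ₑ ≤ h (j - k) * ‖v‖ₑ) (hh : ∑' l, h l ≠ ∞)
    {x y : ι → F} {M M' : ℝ≥0∞} (hM : M ≠ ∞) (hx : ∀ k, ‖x k‖ₑ ≤ M) (hM' : M' ≠ ∞)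
    (hy : ∀ k, ‖y k‖ₑ ≤ M') (j : ι) :
    syn B (fun k => x k + y k) j = syn B x j + syn B y j := by
  simp only [syn, map_add]
  exact (summable_syn hB hh hM hx j).tsum_add (summable_syn hB hh hM' hy j)

theorem syn_sum {κ : Type*} (hB : ∀ j k v, ‖B j k v‖ₑ ≤ h (j - k) * ‖v‖ₑ) (hh : ∑' l, h l ≠ ∞)
    (s : Finset κ) {x : κ → ι → F} {M : κ → ℝ≥0∞} (hM : ∀ i, M i ≠ ∞)
    (hx : ∀ i k, ‖x i k‖ₑ ≤ M i) (j : ι) :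
    syn B (fun k => ∑ i ∈ s, x i k) j = ∑ i ∈ s, syn B (x i) j := by
  simp only [syn, map_sum]
  exact Summable.tsum_finsetSum fun i _ => summable_syn hB hh (hM i) (hx i) j

theorem enorm_le_one_of_mem_Icc {t : ℝ} (ht : t ∈ Set.Icc (0 : ℝ) 1) : ‖t‖ₑ ≤ 1 := by
  rw [Real.enorm_of_nonneg ht.1]
  exact ENNReal.ofReal_le_one.2 ht.2

theorem enorm_smul_le_of_mem_Icc {t : ℝ} (ht : t ∈ Set.Icc (0 : ℝ) 1) (v : F) :
    ‖t • v‖ₑ ≤ ‖v‖ₑ := by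
  rw [enorm_smul]
  exact mul_le_of_le_one_left zero_le (enorm_le_one_of_mem_Icc ht)

/-- Commuting a cutoff through `syn B`. -/
theorem enorm_syn_smul_le (hB : ∀ j k v, ‖B j k v‖ₑ ≤ h (j - k) * ‖v‖ₑ) (hh : ∑' l, h l ≠ ∞)
    {x : ι → F} {M : ℝ≥0∞} (hM : M ≠ ∞) (hx : ∀ k, ‖x k‖ₑ ≤ M) {χ : ι → ℝ}
    (hχ : ∀ k, χ k ∈ Set.Icc (0 : ℝ) 1) (j : ι) :
    ‖syn B (fun k => χ k • x k) j‖ₑ ≤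
      ‖χ j‖ₑ * ‖syn B x j‖ₑ + ∑' k, h (j - k) * (‖χ k - χ j‖ₑ * ‖x k‖ₑ) := by
  have h1 : syn B (fun k => χ k • x k) j =
      χ j • syn B x j + syn B (fun k => (χ k - χ j) • x k) j := by
    have := syn_sub hB hh hM (fun k => (enorm_smul_le_of_mem_Icc (hχ k) (x k)).trans (hx k)) hM
      (fun k => (enorm_smul_le_of_mem_Icc (hχ j) (x k)).trans (hx k)) j
    simp only [← sub_smul] at this
    rw [this, syn_smul]
    abel
  rw [h1]
  refine (enorm_add_le _ _).trans (add_le_add (enorm_smul _ _).le ?_)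
  refine (enorm_syn_le hB _ j).trans (ENNReal.tsum_le_tsum fun k => ?_)
  simp only [enorm_smul, le_refl]

end syn

/-! ### Partitions of unity subordinate to blocks -/

/-- Blocks together with a partition of unity `ψ` and plateau functions `θ` living on
neighbourhoods of the blocks, with modulus of continuity `ρ`. -/
structure Cutoff (ι : Type) [AddCommGroup ι] where
  /-- the block of an index -/
  blk : ι → ι
  /-- the offsets of neighbouring blocks -/
  D : Finset ι
  /-- the partition of unity -/
  ψ : ι → ι → ℝ
  /-- the plateau functions -/
  θ : ι → ι → ℝ
  /-- the modulus of continuity -/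
  ρ : ι → ℝ≥0∞
  zero_mem : 0 ∈ D
  blk_add : ∀ k l, blk (k + l) - blk k - blk l ∈ D
  ψ_mem : ∀ n k, ψ n k ∈ Set.Icc (0 : ℝ) 1
  θ_mem : ∀ n k, θ n k ∈ Set.Icc (0 : ℝ) 1
  ψ_supp : ∀ n k, ψ n k ≠ 0 → n - blk k ∈ D
  θ_supp : ∀ n k, θ n k ≠ 0 → n - blk k ∈ D
  ψ_sum : ∀ k, ∑ δ ∈ D, ψ (blk k + δ) k = 1
  θ_eq_one : ∀ n k, ψ n k ≠ 0 → θ n k = 1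
  ψ_lip : ∀ n j k, ‖ψ n k - ψ n j‖ₑ ≤ ρ (j - k)
  θ_lip : ∀ n j k, ‖θ n k - θ n j‖ₑ ≤ ρ (j - k)

namespace Cutoff

variable {ι : Type} [AddCommGroup ι] (χ : Cutoff ι) {n : (ι → ℝ≥0∞) → ℝ≥0∞} {p : ℝ≥0∞}

/-- The amalgam of a local `ℓ^p` norm on blocks and a global norm `n`. -/
noncomputable def norm (p : ℝ≥0∞) (n : (ι → ℝ≥0∞) → ℝ≥0∞) (a : ι → ℝ≥0∞) : ℝ≥0∞ :=
  n (lqFiber p χ.blk a)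

theorem goodNorm_norm (hp : 1 ≤ p) (hn : GoodNorm n 1) : GoodNorm (χ.norm p n) χ.D.card where
  mono h := hn.mono (lqFiber_mono p χ.blk h)
  const_mul c a := by
    unfold norm
    refine (hn.mono fun m => ?_).trans (hn.const_mul c _)
    rw [lqFiber_const_mul hp]
  tsum u := (hn.mono fun m => lqFiber_tsum_le hp χ.blk u m).trans (hn.tsum _)
  shift a l := by
    classical
    have key : ∀ m, lqFiber p χ.blk (fun j => a (j + l)) m ≤
        ∑ δ ∈ χ.D, lqFiber p χ.blk a (m + χ.blk l + δ) := by
      intro m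
      have h1 : ∀ δ, lqFiber p χ.blk a (m + χ.blk l + δ) =
          lq p (fun k => if χ.blk (k + l) = m + χ.blk l + δ then a (k + l) else 0) := fun δ =>
        (lq_comp_equiv p (Equiv.addRight l) _).symm
      simp_rw [h1]
      refine le_trans ?_ (lq_finset_sum_le hp χ.D _)
      refine lqFiber_le_lq p _ fun k hk => ?_
      refine le_trans ?_ (Finset.single_le_sum (f := fun δ =>
        if χ.blk (k + l) = m + χ.blk l + δ then a (k + l) else 0)
        (fun _ _ => zero_le) (χ.blk_add k l))
      rw [if_pos]
      rw [← hk]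
      abel
    refine (hn.mono key).trans ?_
    refine (hn.sum _ _).trans ?_
    rw [← nsmul_eq_mul]
    refine Finset.sum_le_card_nsmul _ _ _ fun δ _ => ?_
    have := hn.shift (lqFiber p χ.blk a) (χ.blk l + δ)
    rw [one_mul] at this
    simp only [add_assoc]
    exact this

theorem le_norm (hp : 1 ≤ p) (hn : ∀ a, lq ∞ a ≤ n a) (a : ι → ℝ≥0∞) (k : ι) :
    a k ≤ χ.norm p n a :=
  (le_lqFiber hp χ.blk a k).trans ((le_lq le_top _ _).trans (hn _))

/-- The indicator of the relation that block `n` is a neighbour of the block of `k`. -/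
noncomputable def near (n k : ι) : ℝ≥0∞ := open Classical in if n - χ.blk k ∈ χ.D then 1 else 0

theorem ψ_enorm_le (n k : ι) : ‖χ.ψ n k‖ₑ ≤ χ.near n k := by
  unfold near
  split_ifs with h
  · exact enorm_le_one_of_mem_Icc (χ.ψ_mem n k)
  · have : χ.ψ n k = 0 := by
      by_contra h'
      exact h (χ.ψ_supp n k h')
    simp [this]

theorem ψ_diff_le (n j k : ι) :
    ‖χ.ψ n k - χ.ψ n j‖ₑ ≤ χ.ρ (j - k) * (χ.near n k + χ.near n j) := by
  unfold near
  by_cases h1 : n - χ.blk k ∈ χ.D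
  · refine (χ.ψ_lip n j k).trans (le_mul_of_one_le_right zero_le ?_)
    simp [h1]
  by_cases h2 : n - χ.blk j ∈ χ.D
  · refine (χ.ψ_lip n j k).trans (le_mul_of_one_le_right zero_le ?_)
    simp [h2]
  · have e1 : χ.ψ n k = 0 := by
      by_contra h'
      exact h1 (χ.ψ_supp n k h')
    have e2 : χ.ψ n j = 0 := by
      by_contra h'
      exact h2 (χ.ψ_supp n j h')
    simp [e1, e2]

theorem lq_near_mul_le (hp : 1 ≤ p) (a : ι → ℝ≥0∞) (m : ι) :
    lq p (fun k => χ.near m k * a k) ≤ ∑ δ ∈ χ.D, lqFiber p χ.blk a (m - δ) := by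
  classical
  refine le_trans (lq_mono p fun k => ?_) (lq_finset_sum_le hp χ.D
    fun δ k => if χ.blk k = m - δ then a k else 0)
  unfold near
  split_ifs with h
  · refine le_trans ?_ (Finset.single_le_sum (f := fun δ =>
        if χ.blk k = m - δ then a k else 0) (fun _ _ => zero_le) h)
    simp
  · simp

theorem lqFiber_sum_near_le (hp : 1 ≤ p) (u : ι → ι → ℝ≥0∞) (m : ι) :
    lqFiber p χ.blk (fun k => ∑ δ ∈ χ.D, u (χ.blk k + δ) k) m ≤
      ∑ δ ∈ χ.D, lq p (u (m + δ)) := by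
  refine le_trans (lqFiber_le_lq p _ fun k hk => ?_) (lq_finset_sum_le hp χ.D fun δ => u (m + δ))
  rw [hk]

/-- The block neighbours of an index. -/
noncomputable def nb (k : ι) : Finset ι := χ.D.map (addLeftEmbedding (χ.blk k))

theorem mem_nb {m k : ι} : m ∈ χ.nb k ↔ m - χ.blk k ∈ χ.D := by
  simp only [nb, Finset.mem_map, addLeftEmbedding_apply]
  constructor
  · rintro ⟨δ, hδ, rfl⟩
    simpa
  · intro h
    exact ⟨_, h, by abel⟩

theorem sum_nb {M : Type*} [AddCommMonoid M] (f : ι → M) (k : ι) :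
    ∑ m ∈ χ.nb k, f m = ∑ δ ∈ χ.D, f (χ.blk k + δ) := by
  simp [nb]

end Cutoff

theorem Solves.of_equiv {ι : Type} {F E : Type*} [NormedAddCommGroup F] [NormedSpace ℝ F]
    [NormedAddCommGroup E] [NormedSpace ℝ E] {B : ι → ι → F →L[ℝ] E}
    {n n' : (ι → ℝ≥0∞) → ℝ≥0∞} {a b κ : ℝ≥0∞} (hb : b ≠ ∞)
    (h : Solves B n κ) (h₁ : ∀ u, n u ≤ b * n' u) (h₂ : ∀ u, n' u ≤ a * n u) :
    Solves B n' (a * b * κ) := by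
  intro x hx
  obtain ⟨s, hs, hsn⟩ := h x ((h₁ _).trans_lt (ENNReal.mul_lt_top hb.lt_top hx))
  refine ⟨s, hs, (h₂ _).trans ?_⟩
  calc _ ≤ a * (κ * (b * n' fun j => ‖syn B x j‖ₑ)) :=
        mul_le_mul_right (hsn.trans (mul_le_mul_right (h₁ _) _)) _
    _ = _ := by ring

section bootstrap

variable {ι : Type} [AddCommGroup ι] {F E : Type*} [NormedAddCommGroup F] [NormedSpace ℝ F]
  [NormedAddCommGroup E] [NormedSpace ℝ E] [CompleteSpace E] {B : ι → ι → F →L[ℝ] E}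
  {h : ι → ℝ≥0∞} {n : (ι → ℝ≥0∞) → ℝ≥0∞} {p : ℝ≥0∞}

/-- The local pieces of the image are controlled by the image, up to a commutator. -/
theorem localized_image_le (χ : Cutoff ι) (hp : 1 ≤ p) (hn : GoodNorm n 1)
    (hB : ∀ j k v, ‖B j k v‖ₑ ≤ h (j - k) * ‖v‖ₑ) (hh : ∑' l, h l ≠ ∞)
    {x : ι → F} {M : ℝ≥0∞} (hM : M ≠ ∞) (hx : ∀ k, ‖x k‖ₑ ≤ M) :
    n (fun m => lq p fun j => ‖syn B (fun k => χ.ψ m k • x k) j‖ₑ) ≤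
      χ.D.card * χ.norm p n (fun j => ‖syn B x j‖ₑ) +
        (χ.D.card + χ.D.card ^ 2) * (∑' l, h l * χ.ρ l) * χ.norm p n (fun k => ‖x k‖ₑ) := by
  set ht : ι → ℝ≥0∞ := fun l => h l * χ.ρ l with hht
  have pt : ∀ m j, ‖syn B (fun k => χ.ψ m k • x k) j‖ₑ ≤
      (χ.near m j * ‖syn B x j‖ₑ + conv ht (fun k => χ.near m k * ‖x k‖ₑ) j) +
        χ.near m j * conv ht (fun k => ‖x k‖ₑ) j := by
    intro m j
    refine (enorm_syn_smul_le hB hh hM hx (χ.ψ_mem m) j).trans ?_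
    rw [add_assoc]
    refine add_le_add (mul_le_mul_left (χ.ψ_enorm_le m j) _) ?_
    unfold conv
    rw [← ENNReal.tsum_mul_left, ← ENNReal.tsum_add]
    refine ENNReal.tsum_le_tsum fun k => ?_
    calc h (j - k) * (‖χ.ψ m k - χ.ψ m j‖ₑ * ‖x k‖ₑ)
        ≤ h (j - k) * ((χ.ρ (j - k) * (χ.near m k + χ.near m j)) * ‖x k‖ₑ) := by
          gcongr
          exact χ.ψ_diff_le m j k
      _ = _ := by simp only [hht]; ring
  have hloc : ∀ m, lq p (fun j => ‖syn B (fun k => χ.ψ m k • x k) j‖ₑ) ≤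
      ((∑ δ ∈ χ.D, lqFiber p χ.blk (fun j => ‖syn B x j‖ₑ) (m - δ)) +
        (∑' l, ht l) * ∑ δ ∈ χ.D, lqFiber p χ.blk (fun k => ‖x k‖ₑ) (m - δ)) +
        ∑ δ ∈ χ.D, lqFiber p χ.blk (conv ht (fun k => ‖x k‖ₑ)) (m - δ) := by
    intro m
    refine (lq_mono p (pt m)).trans ((lq_add_le hp _ _).trans (add_le_add
      ((lq_add_le hp _ _).trans (add_le_add (χ.lq_near_mul_le hp _ m) ?_))
      (χ.lq_near_mul_le hp _ m)))
    refine ((goodNorm_lq hp).conv_le _ _).trans ?_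
    rw [one_mul]
    gcongr
    exact χ.lq_near_mul_le hp _ m
  refine (hn.mono hloc).trans ((hn.add _ _).trans ?_)
  refine (add_le_add ((hn.add _ _).trans (add_le_add (hn.sum_shift_sub χ.D _)
    ((hn.const_mul _ _).trans (mul_le_mul_right (hn.sum_shift_sub χ.D _) _))))
    (hn.sum_shift_sub χ.D _)).trans ?_
  simp only [mul_one]
  have hc := (χ.goodNorm_norm hp hn).conv_le ht (fun k => ‖x k‖ₑ)
  unfold Cutoff.norm at hc ⊢
  rw [add_assoc]
  refine add_le_add le_rfl ((add_le_add le_rfl (mul_le_mul_right hc _)).trans (le_of_eq ?_))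
  ring

/-- Gluing local kernel elements by the plateau functions produces a small image. -/
theorem norm_syn_glue_le (χ : Cutoff ι) (hp : 1 ≤ p) (hn : GoodNorm n 1)
    (hB : ∀ j k v, ‖B j k v‖ₑ ≤ h (j - k) * ‖v‖ₑ) (hh : ∑' l, h l ≠ ∞)
    {v : ι → ι → F} {γ : ι → ℝ≥0∞} (hγ : ∀ m, lq p (fun k => ‖v m k‖ₑ) ≤ γ m)
    (hγt : n γ ≠ ∞) (hn' : ∀ a, lq ∞ a ≤ n a) (hker : ∀ m j, syn B (v m) j = 0) :
    χ.norm p n (fun j =>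
        ‖syn B (fun k => ∑ δ ∈ χ.D, χ.θ (χ.blk k + δ) k • v (χ.blk k + δ) k) j‖ₑ) ≤
      (χ.D.card + χ.D.card ^ 2) * (∑' l, h l * χ.ρ l) * n γ := by
  classical
  set ht : ι → ℝ≥0∞ := fun l => h l * χ.ρ l with hht
  set w : ι → F := fun k => ∑ δ ∈ χ.D, χ.θ (χ.blk k + δ) k • v (χ.blk k + δ) k with hw
  have hγm : ∀ m, γ m ≤ n γ := fun m => (le_lq le_top γ m).trans (hn' γ)
  have hvb : ∀ m k, ‖v m k‖ₑ ≤ n γ := fun m k =>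
    (le_lq hp (fun k => ‖v m k‖ₑ) k).trans ((hγ m).trans (hγm m))
  have hθb : ∀ m j k, ‖χ.θ m j • v m k‖ₑ ≤ n γ := fun m j k =>
    (enorm_smul_le_of_mem_Icc (χ.θ_mem m j) _).trans (hvb m k)
  have hsb : ∀ j k, ‖∑ m ∈ χ.nb j, χ.θ m j • v m k‖ₑ ≤ χ.D.card * n γ := by
    intro j k
    refine (enorm_sum_le _ _).trans ((Finset.sum_le_card_nsmul _ _ _ fun m _ => hθb m j k).trans ?_)
    simp [Cutoff.nb]
  have hct : (χ.D.card : ℝ≥0∞) * n γ ≠ ∞ := ENNReal.mul_ne_top (by simp) hγt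
  have hww : ∀ k, w k = ∑ m ∈ χ.nb k, χ.θ m k • v m k := fun k =>
    (χ.sum_nb (fun m => χ.θ m k • v m k) k).symm
  have hrj : ∀ j, syn B w j =
      syn B (fun k => w k - ∑ m ∈ χ.nb j, χ.θ m j • v m k) j := by
    intro j
    rw [syn_sub hB hh hct (fun k => by rw [hww]; exact hsb k k) hct (hsb j),
      syn_sum hB hh (χ.nb j) (M := fun _ => n γ) (fun _ => hγt) (fun m k => hθb m j k)]
    simp [syn_smul, hker]
  have hdiff : ∀ j k, ‖w k - ∑ m ∈ χ.nb j, χ.θ m j • v m k‖ₑ ≤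
      χ.ρ (j - k) * ((∑ δ ∈ χ.D, ‖v (χ.blk k + δ) k‖ₑ) + ∑ δ ∈ χ.D, ‖v (χ.blk j + δ) k‖ₑ) := by
    intro j k
    have e : ∀ i, i = j ∨ i = k → ∑ m ∈ χ.nb i, χ.θ m i • v m k =
        ∑ m ∈ χ.nb k ∪ χ.nb j, χ.θ m i • v m k := by
      intro i hi
      refine Finset.sum_subset ?_ fun m _ hm => ?_
      · rcases hi with rfl | rfl
        · exact Finset.subset_union_right
        · exact Finset.subset_union_left
      · have : χ.θ m i = 0 := by
          by_contra h'
          exact hm (χ.mem_nb.2 (χ.θ_supp m i h'))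
        simp [this]
    rw [hww, e j (Or.inl rfl), e k (Or.inr rfl), ← Finset.sum_sub_distrib,
      ← χ.sum_nb (fun m => ‖v m k‖ₑ) k, ← χ.sum_nb (fun m => ‖v m k‖ₑ) j,
      ← Finset.sum_union_inter]
    refine (enorm_sum_le _ _).trans (le_trans ?_ (mul_le_mul_right le_self_add _))
    rw [Finset.mul_sum]
    refine Finset.sum_le_sum fun m _ => ?_
    rw [← sub_smul, enorm_smul]
    gcongr
    exact χ.θ_lip m j k
  have hr : ∀ j, ‖syn B w j‖ₑ ≤ conv ht (fun k => ∑ δ ∈ χ.D, ‖v (χ.blk k + δ) k‖ₑ) j +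
      ∑ δ ∈ χ.D, conv ht (fun k => ‖v (χ.blk j + δ) k‖ₑ) j := by
    intro j
    rw [hrj]
    refine (enorm_syn_le hB _ j).trans ?_
    unfold conv
    rw [← Summable.tsum_finsetSum fun _ _ => ENNReal.summable, ← ENNReal.tsum_add]
    refine ENNReal.tsum_le_tsum fun k => (mul_le_mul_right (hdiff j k) _).trans (le_of_eq ?_)
    simp only [← Finset.mul_sum, hht]
    ring
  have hG := χ.goodNorm_norm hp hn
  have h1 : χ.norm p n (fun k => ∑ δ ∈ χ.D, ‖v (χ.blk k + δ) k‖ₑ) ≤ χ.D.card * n γ := by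
    refine (hn.mono fun m => (χ.lqFiber_sum_near_le hp (fun m k => ‖v m k‖ₑ) m).trans
      (Finset.sum_le_sum fun δ _ => hγ _)).trans ((hn.sum_shift χ.D γ).trans ?_)
    rw [mul_one]
  have h2 : χ.norm p n (fun j => ∑ δ ∈ χ.D, conv ht (fun k => ‖v (χ.blk j + δ) k‖ₑ) j) ≤
      (∑' l, ht l) * (χ.D.card * n γ) := by
    refine (hn.mono (b := fun m => (∑' l, ht l) * ∑ δ ∈ χ.D, γ (m + δ)) fun m => ?_).trans
      ((hn.const_mul _ _).trans (mul_le_mul_right ((hn.sum_shift χ.D γ).trans ?_) _))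
    · refine (χ.lqFiber_sum_near_le hp (fun m => conv ht fun k => ‖v m k‖ₑ) m).trans ?_
      rw [Finset.mul_sum]
      refine Finset.sum_le_sum fun δ _ => ((goodNorm_lq hp).conv_le _ _).trans ?_
      rw [one_mul]
      gcongr
      exact hγ _
    · rw [mul_one]
  refine (hG.mono hr).trans ((hG.add _ _).trans ((add_le_add ((hG.conv_le _ _).trans
    (mul_le_mul_right h1 _)) h2).trans (le_of_eq ?_)))
  ring

/-- A local solvability estimate improves any a priori bound for an amalgam norm to a universal
one, provided that the modulus of continuity of the cutoffs is small. -/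
theorem solves_bootstrap (χ : Cutoff ι) (hp : 1 ≤ p) (hn : GoodNorm n 1)
    (hn' : ∀ a, lq ∞ a ≤ n a) (hB : ∀ j k v, ‖B j k v‖ₑ ≤ h (j - k) * ‖v‖ₑ)
    (hh : ∑' l, h l ≠ ∞) {C κ : ℝ≥0∞} (hC : C ≠ ∞) (hκ : κ ≠ ∞) (hP : Solves B (lq p) C)
    (hQ : Solves B (χ.norm p n) κ)
    (hs : (χ.D.card + χ.D.card ^ 2) * (∑' l, h l * χ.ρ l) * κ ≤ 1)
    (hs' : κ * ((χ.D.card + χ.D.card ^ 2) * (∑' l, h l * χ.ρ l) *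
      (χ.D.card * κ + C * (χ.D.card + 1))) ≤ 1) :
    Solves B (χ.norm p n) (χ.D.card * C * (χ.D.card + 1) + 1) := by
  intro x₀ hx₀
  have hG := χ.goodNorm_norm hp hn
  obtain ⟨x, hxT, hxg⟩ := hQ x₀ hx₀
  simp only [← hxT] at hxg ⊢
  set D : ℝ≥0∞ := (χ.D.card : ℝ≥0∞) with hD
  have hDt : D ≠ ∞ := by simp [hD]
  set g := χ.norm p n (fun j => ‖syn B x j‖ₑ) with hg
  by_cases hgt : g = ∞
  · refine ⟨x, fun _ => rfl, ?_⟩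
    rw [hgt, ENNReal.mul_top (by positivity)]
    exact le_top
  set ε := ∑' l, h l * χ.ρ l with hε
  set X := χ.norm p n (fun k => ‖x k‖ₑ) with hX
  have hXt : X ≠ ∞ := ne_top_of_le_ne_top (ENNReal.mul_ne_top hκ hgt) hxg
  have hxb : ∀ k, ‖x k‖ₑ ≤ X := χ.le_norm hp hn' _
  set β : ι → ℝ≥0∞ := fun m => lq p fun j => ‖syn B (fun k => χ.ψ m k • x k) j‖ₑ with hβ
  have hβn : n β ≤ (D + 1) * g := by
    refine (localized_image_le χ hp hn hB hh hXt hxb).trans ?_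
    rw [add_mul D 1 g, one_mul]
    refine add_le_add le_rfl ?_
    calc (D + D ^ 2) * ε * X ≤ (D + D ^ 2) * ε * (κ * g) := by gcongr
      _ = ((D + D ^ 2) * ε * κ) * g := by ring
      _ ≤ 1 * g := by gcongr
      _ = g := one_mul g
  have hβt : n β ≠ ∞ :=
    ne_top_of_le_ne_top (ENNReal.mul_ne_top (by finiteness) hgt) hβn
  have hψx : ∀ m, lq p (fun k => ‖χ.ψ m k • x k‖ₑ) ≤
      ∑ δ ∈ χ.D, lqFiber p χ.blk (fun k => ‖x k‖ₑ) (m - δ) := by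
    intro m
    refine le_trans (lq_mono p fun k => ?_) (χ.lq_near_mul_le hp _ m)
    rw [enorm_smul]
    gcongr
    exact χ.ψ_enorm_le m k
  have hfib : ∀ m, lqFiber p χ.blk (fun k => ‖x k‖ₑ) m ≤ X := fun m =>
    (le_lq le_top _ m).trans (hn' _)
  have hψxt : ∀ m, lq p (fun k => ‖χ.ψ m k • x k‖ₑ) < ∞ := fun m =>
    (hψx m).trans_lt (ENNReal.sum_lt_top.2 fun δ _ => (hfib _).trans_lt hXt.lt_top)
  choose y hyT hyb using fun m => hP (fun k => χ.ψ m k • x k) (hψxt m)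
  set γ : ι → ℝ≥0∞ := fun m =>
    (∑ δ ∈ χ.D, lqFiber p χ.blk (fun k => ‖x k‖ₑ) (m - δ)) + C * β m with hγ
  have hγn : n γ ≤ (D * κ + C * (D + 1)) * g := by
    refine (hn.add _ _).trans ((add_le_add (hn.sum_shift_sub χ.D _) (hn.const_mul _ _)).trans ?_)
    rw [add_mul (D * κ), mul_one, mul_assoc D, mul_assoc C]
    exact add_le_add (mul_le_mul_right hxg _) (mul_le_mul_right hβn _)
  have hγt : n γ ≠ ∞ := ne_top_of_le_ne_top (ENNReal.mul_ne_top (by finiteness) hgt) hγn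
  set v : ι → ι → F := fun m k => χ.ψ m k • x k - y m k with hv
  have hvγ : ∀ m, lq p (fun k => ‖v m k‖ₑ) ≤ γ m := fun m =>
    (lq_mono p fun k => enorm_sub_le).trans ((lq_add_le hp _ _).trans
      (add_le_add (hψx m) (hyb m)))
  have hyk : ∀ m k, ‖y m k‖ₑ ≤ C * n β := fun m k =>
    (le_lq hp (fun k => ‖y m k‖ₑ) k).trans ((hyb m).trans
      (mul_le_mul_right ((le_lq le_top β m).trans (hn' β)) _))
  have hker : ∀ m j, syn B (v m) j = 0 := by
    intro m j
    rw [hv, syn_sub hB hh hXt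
      (fun k => (enorm_smul_le_of_mem_Icc (χ.ψ_mem m k) _).trans (hxb k))
      (ENNReal.mul_ne_top hC hβt) (hyk m), hyT, sub_self]
  set x' : ι → F := fun k => ∑ δ ∈ χ.D, χ.θ (χ.blk k + δ) k • y (χ.blk k + δ) k with hx'
  have hx'n : χ.norm p n (fun k => ‖x' k‖ₑ) ≤ D * C * (D + 1) * g := by
    refine (hn.mono (b := fun m => ∑ δ ∈ χ.D, C * β (m + δ)) fun m => ?_).trans ?_
    · refine le_trans (lqFiber_mono p χ.blk (fun k => ?_) m)
        ((χ.lqFiber_sum_near_le hp (fun m k => ‖y m k‖ₑ) m).trans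
          (Finset.sum_le_sum fun δ _ => hyb _))
      exact (enorm_sum_le _ _).trans (Finset.sum_le_sum fun δ _ =>
        enorm_smul_le_of_mem_Icc (χ.θ_mem _ _) _)
    · refine (hn.sum_shift χ.D (fun m => C * β m)).trans ?_
      rw [mul_one, mul_assoc D C, mul_assoc D, mul_assoc C]
      gcongr
      exact (hn.const_mul _ _).trans (mul_le_mul_right hβn _)
  have hx't : D * C * (D + 1) * g ≠ ∞ := ENNReal.mul_ne_top (by finiteness) hgt
  have hx'b : ∀ k, ‖x' k‖ₑ ≤ D * C * (D + 1) * g := fun k =>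
    (χ.le_norm hp hn' (fun k => ‖x' k‖ₑ) k).trans hx'n
  have hxx' : (fun k => x k - x' k) =
      fun k => ∑ δ ∈ χ.D, χ.θ (χ.blk k + δ) k • v (χ.blk k + δ) k := by
    ext k
    simp only [hv, smul_sub, Finset.sum_sub_distrib, hx']
    congr 1
    conv_lhs => rw [← one_smul ℝ (x k), ← χ.ψ_sum k, Finset.sum_smul]
    refine Finset.sum_congr rfl fun δ _ => ?_
    by_cases h0 : χ.ψ (χ.blk k + δ) k = 0
    · simp [h0]
    · rw [χ.θ_eq_one _ _ h0, one_smul]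
  have hr : χ.norm p n (fun j => ‖syn B (fun k => x k - x' k) j‖ₑ) ≤
      (D + D ^ 2) * ε * n γ := by
    rw [hxx']
    exact norm_syn_glue_le χ hp hn hB hh hvγ hγt hn' hker
  obtain ⟨x'', hx''T, hx''n⟩ := hQ (fun k => x k - x' k) (by
    refine (hG.mono fun k => enorm_sub_le).trans_lt ((hG.add _ _).trans_lt ?_)
    exact ENNReal.add_lt_top.2 ⟨hXt.lt_top, hx'n.trans_lt hx't.lt_top⟩)
  have hx''g : χ.norm p n (fun k => ‖x'' k‖ₑ) ≤ g := by
    calc _ ≤ κ * ((D + D ^ 2) * ε * ((D * κ + C * (D + 1)) * g)) :=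
          hx''n.trans (mul_le_mul_right (hr.trans (mul_le_mul_right hγn _)) _)
      _ = (κ * ((D + D ^ 2) * ε * (D * κ + C * (D + 1)))) * g := by ring
      _ ≤ 1 * g := by gcongr
      _ = g := one_mul g
  refine ⟨fun k => x' k + x'' k, fun j => ?_, ?_⟩
  · rw [syn_add hB hh hx't hx'b hgt
      (fun k => (χ.le_norm hp hn' (fun k => ‖x'' k‖ₑ) k).trans hx''g), hx''T,
      syn_sub hB hh hXt hxb hx't hx'b]
    abel
  · refine (hG.mono fun k => enorm_add_le _ _).trans ((hG.add _ _).trans ?_)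
    rw [add_mul _ 1 g, one_mul]
    exact add_le_add hx'n hx''g

end bootstrap

/-! ### Cutoffs on the integer lattice -/

/-- A trapezoidal bump of height at most one supported in `[-c, c]`. -/
noncomputable def bump (c t : ℝ) : ℝ := max (min (c - |t|) 1) 0

theorem bump_mem (c t : ℝ) : bump c t ∈ Set.Icc (0 : ℝ) 1 :=
  ⟨le_max_right _ _, max_le (min_le_right _ _) zero_le_one⟩

theorem abs_bump_sub_le (c s t : ℝ) : |bump c s - bump c t| ≤ |s - t| := by
  refine (abs_max_sub_max_le_abs _ _ _).trans ((abs_min_sub_min_le_max _ _ _ _).trans ?_)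
  rw [sub_self, abs_zero]
  refine max_le ?_ (abs_nonneg _)
  rw [show c - |s| - (c - |t|) = |t| - |s| by ring, abs_sub_comm s t]
  exact abs_abs_sub_abs_le t s

theorem abs_lt_of_bump_ne_zero {c t : ℝ} (h : bump c t ≠ 0) : |t| < c := by
  by_contra h'
  refine h (max_eq_right ((min_le_left _ _).trans ?_))
  linarith

theorem bump_eq_one {c t : ℝ} (h : |t| ≤ c - 1) : bump c t = 1 := by
  rw [bump, min_eq_right (by linarith), max_eq_left zero_le_one]

theorem sum_bump_one {u : ℝ} (h0 : 0 ≤ u) (h1 : u < 1) :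
    ∑ δ ∈ Finset.Icc (-2 : ℤ) 2, bump 1 (u - δ) = 1 := by
  have e : Finset.Icc (-2 : ℤ) 2 = {-2, -1, 0, 1, 2} := by decide
  have b0 : bump 1 u = 1 - u := by
    rw [bump, abs_of_nonneg h0, min_eq_left (by linarith), max_eq_left (by linarith)]
  have b1 : bump 1 (u - 1) = u := by
    rw [bump, abs_of_neg (by linarith), min_eq_left (by linarith), max_eq_left (by linarith)]
    ring
  have b2 : ∀ t : ℝ, 1 ≤ |t| → bump 1 t = 0 := fun t ht =>
    max_eq_right ((min_le_left _ _).trans (by linarith))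
  rw [e]
  simp only [Finset.mem_insert, Finset.mem_singleton, Finset.sum_insert,
    reduceCtorEq, not_false_eq_true, or_self, Int.reduceNeg, neg_inj, OfNat.ofNat_ne_one]
  norm_num
  rw [b0, b1, b2 (u + 2) (by rw [abs_of_nonneg] <;> linarith),
    b2 (u + 1) (by rw [abs_of_nonneg] <;> linarith),
    b2 (u - 2) (by rw [abs_of_neg] <;> linarith)]
  ring

theorem abs_prod_sub_prod_le {ι : Type*} (s : Finset ι) {f g : ι → ℝ}
    (hf : ∀ i, f i ∈ Set.Icc (0 : ℝ) 1) (hg : ∀ i, g i ∈ Set.Icc (0 : ℝ) 1) :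
    |∏ i ∈ s, f i - ∏ i ∈ s, g i| ≤ ∑ i ∈ s, |f i - g i| := by
  classical
  induction s using Finset.induction_on with
  | empty => simp
  | insert a s ha ih =>
    rw [Finset.prod_insert ha, Finset.prod_insert ha, Finset.sum_insert ha]
    have e : f a * ∏ i ∈ s, f i - g a * ∏ i ∈ s, g i =
      (f a - g a) * ∏ i ∈ s, f i + g a * (∏ i ∈ s, f i - ∏ i ∈ s, g i) := by ring
    have h0 : 0 ≤ ∏ i ∈ s, f i := Finset.prod_nonneg fun i _ => (hf i).1
    have h1 : ∏ i ∈ s, f i ≤ 1 := Finset.prod_le_one (fun i _ => (hf i).1) fun i _ => (hf i).2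
    rw [e]
    refine (abs_add_le _ _).trans (add_le_add ?_ ?_)
    · rw [abs_mul, abs_of_nonneg h0]
      exact mul_le_of_le_one_right (abs_nonneg _) h1
    · rw [abs_mul, abs_of_nonneg (hg a).1]
      exact (mul_le_of_le_one_left (abs_nonneg _) (hg a).2).trans ih

section lattice

variable {d : ℕ}

/-- The product bump of scale `N` centred at `N n`. -/
noncomputable def bumpProd (c : ℝ) (N : ℕ) (n k : Fin d → ℤ) : ℝ :=
  ∏ i, bump c ((k i : ℝ) / N - n i)

theorem bumpProd_mem (c : ℝ) (N : ℕ) (n k : Fin d → ℤ) :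
    bumpProd c N n k ∈ Set.Icc (0 : ℝ) 1 :=
  ⟨Finset.prod_nonneg fun _ _ => (bump_mem _ _).1,
    Finset.prod_le_one (fun _ _ => (bump_mem _ _).1) fun _ _ => (bump_mem _ _).2⟩

/-- The modulus of continuity of product bumps of scale `N`. -/
noncomputable def bumpModulus (N : ℕ) (l : Fin d → ℤ) : ℝ≥0∞ :=
  ENNReal.ofReal (min 1 ((∑ i, |(l i : ℝ)|) / N))

theorem bumpProd_lip (c : ℝ) (N : ℕ) (n j k : Fin d → ℤ) :
    ‖bumpProd c N n k - bumpProd c N n j‖ₑ ≤ bumpModulus N (j - k) := by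
  rw [Real.enorm_eq_ofReal_abs]
  refine ENNReal.ofReal_le_ofReal (le_min ?_ ?_)
  · have h1 := bumpProd_mem c N n k
    have h2 := bumpProd_mem c N n j
    rw [abs_le]
    constructor <;> linarith [h1.1, h1.2, h2.1, h2.2]
  · refine (abs_prod_sub_prod_le _ (fun _ => bump_mem _ _) (fun _ => bump_mem _ _)).trans ?_
    rw [Finset.sum_div]
    refine Finset.sum_le_sum fun i _ => (abs_bump_sub_le _ _ _).trans (le_of_eq ?_)
    rw [sub_sub_sub_cancel_right, ← sub_div, abs_div, Nat.abs_cast, abs_sub_comm]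
    simp

/-- The offsets of neighbouring blocks in the lattice. -/
noncomputable def offsets (d : ℕ) : Finset (Fin d → ℤ) :=
  Fintype.piFinset fun _ => Finset.Icc (-2) 2

theorem floor_div_bounds {N : ℕ} (hN : 0 < N) (k : ℤ) :
    0 ≤ (k : ℝ) / N - (k / (N : ℤ) : ℤ) ∧ (k : ℝ) / N - (k / (N : ℤ) : ℤ) < 1 := by
  have hN' : (0 : ℝ) < N := by exact_mod_cast hN
  have e : ((k / (N : ℤ) : ℤ) : ℝ) = (⌊(k : ℝ) / N⌋ : ℤ) := by
    rw [Int.floor_div_natCast, Int.floor_intCast]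
  rw [e]
  exact ⟨by linarith [Int.floor_le ((k : ℝ) / N)], by linarith [Int.lt_floor_add_one ((k : ℝ) / N)]⟩

theorem bumpProd_supp {c : ℝ} (hc : c ≤ 2) {N : ℕ} (hN : 0 < N) (n k : Fin d → ℤ)
    (h : bumpProd c N n k ≠ 0) : (n - fun i => k i / (N : ℤ)) ∈ offsets d := by
  rw [offsets, Fintype.mem_piFinset]
  intro i
  have h1 := abs_lt.1 (abs_lt_of_bump_ne_zero (Finset.prod_ne_zero_iff.1 h i (Finset.mem_univ i)))
  obtain ⟨h2, h3⟩ := floor_div_bounds hN (k i)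
  rw [Finset.mem_Icc, Pi.sub_apply]
  constructor
  · have : (-2 : ℝ) ≤ ((n i - k i / (N : ℤ) : ℤ) : ℝ) := by push_cast; linarith
    exact_mod_cast this
  · have : ((n i - k i / (N : ℤ) : ℤ) : ℝ) < 3 := by push_cast; linarith
    have : (n i - k i / (N : ℤ) : ℤ) < 3 := by exact_mod_cast this
    omega

/-- The cutoffs of scale `N` on the integer lattice. -/
noncomputable def latticeCutoff (d : ℕ) {N : ℕ} (hN : 0 < N) : Cutoff (Fin d → ℤ) where
  blk k i := k i / (N : ℤ)
  D := offsets d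
  ψ := bumpProd 1 N
  θ := bumpProd 2 N
  ρ := bumpModulus N
  zero_mem := by simp [offsets]
  blk_add k l := by
    rw [offsets, Fintype.mem_piFinset]
    intro i
    have hN' : (0 : ℤ) < N := by exact_mod_cast hN
    simp only [Pi.sub_apply, Pi.add_apply, Finset.mem_Icc]
    have a1 := Int.mul_ediv_add_emod (k i + l i) N
    have a2 := Int.mul_ediv_add_emod (k i) N
    have a3 := Int.mul_ediv_add_emod (l i) N
    have b1 := Int.emod_nonneg (k i + l i) hN'.ne'
    have b2 := Int.emod_nonneg (k i) hN'.ne'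
    have b3 := Int.emod_nonneg (l i) hN'.ne'
    have c1 := Int.emod_lt_of_pos (k i + l i) hN'
    have c2 := Int.emod_lt_of_pos (k i) hN'
    have c3 := Int.emod_lt_of_pos (l i) hN'
    constructor
    · by_contra! hlt
      nlinarith
    · by_contra! hlt
      nlinarith
  ψ_mem := bumpProd_mem 1 N
  θ_mem := bumpProd_mem 2 N
  ψ_supp := bumpProd_supp (by norm_num) hN
  θ_supp := bumpProd_supp le_rfl hN
  ψ_sum k := by
    simp only [bumpProd, offsets, Pi.add_apply]
    rw [← Finset.prod_univ_sum (fun _ => Finset.Icc (-2) 2)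
      (fun i δ => bump 1 ((k i : ℝ) / N - (k i / (N : ℤ) + δ : ℤ)))]
    refine Finset.prod_eq_one fun i _ => ?_
    obtain ⟨h2, h3⟩ := floor_div_bounds hN (k i)
    refine Eq.trans (Finset.sum_congr rfl fun δ _ => ?_) (sum_bump_one h2 h3)
    rw [Int.cast_add, sub_sub]
  θ_eq_one n k h := Finset.prod_eq_one fun i _ => bump_eq_one (by
    have := abs_lt_of_bump_ne_zero (Finset.prod_ne_zero_iff.1 h i (Finset.mem_univ i))
    linarith)
  ψ_lip := bumpProd_lip 1 N
  θ_lip := bumpProd_lip 2 N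

theorem tendsto_tsum_mul_of_le {ι : Type*} [Countable ι] {h : ι → ℝ≥0∞} (hh : ∑' l, h l ≠ ∞)
    {ρ : ℕ → ι → ℝ≥0∞} (hρ : ∀ N l, ρ N l ≤ 1)
    (hlim : ∀ l, Tendsto (fun N => ρ N l) atTop (𝓝 0)) :
    Tendsto (fun N => ∑' l, h l * ρ N l) atTop (𝓝 0) := by
  let _ : MeasurableSpace ι := ⊤
  have hl : ∀ l, h l ≠ ∞ := ENNReal.ne_top_of_tsum_ne_top hh
  have := tendsto_lintegral_of_dominated_convergence (μ := (Measure.count : Measure ι))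
    (F := fun N l => h l * ρ N l) (f := fun _ => 0) h (fun N => measurable_from_top)
    (fun N => Eventually.of_forall fun l => mul_le_of_le_one_right zero_le (hρ N l))
    (by rwa [lintegral_count]) (Eventually.of_forall fun l => by
      simpa using ENNReal.Tendsto.const_mul (hlim l) (Or.inr (hl l)))
  simpa only [lintegral_count, lintegral_zero] using this

theorem tendsto_bumpModulus (l : Fin d → ℤ) :
    Tendsto (fun N => bumpModulus N l) atTop (𝓝 0) := by
  have h1 : Tendsto (fun N : ℕ => min 1 ((∑ i, |(l i : ℝ)|) / N)) atTop (𝓝 (min 1 0)) :=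
    tendsto_const_nhds.min (tendsto_const_div_atTop_nhds_zero_nat _)
  have := ENNReal.tendsto_ofReal h1
  simpa [bumpModulus] using this

theorem tendsto_tsum_bumpModulus {h : (Fin d → ℤ) → ℝ≥0∞} (hh : ∑' l, h l ≠ ∞) :
    Tendsto (fun N => ∑' l, h l * bumpModulus N l) atTop (𝓝 0) :=
  tendsto_tsum_mul_of_le hh (fun N l => by
    rw [bumpModulus]
    exact ENNReal.ofReal_le_one.2 (min_le_left _ _)) tendsto_bumpModulus

theorem exists_fiber_finset {N : ℕ} (hN : 0 < N) (m : Fin d → ℤ) :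
    ∃ s : Finset (Fin d → ℤ), s.card = N ^ d ∧
      ∀ k, (latticeCutoff d hN).blk k = m → k ∈ s := by
  have hN' : (0 : ℤ) < N := by exact_mod_cast hN
  refine ⟨Fintype.piFinset fun i => Finset.Ico (m i * N) (m i * N + N), by simp, ?_⟩
  rintro k rfl
  rw [Fintype.mem_piFinset]
  intro i
  simp only [latticeCutoff, Finset.mem_Ico]
  have a1 := Int.mul_ediv_add_emod (k i) N
  have b1 := Int.emod_nonneg (k i) hN'.ne'
  have c1 := Int.emod_lt_of_pos (k i) hN'
  constructor <;> linarith

theorem finite_bumpProd_support {N : ℕ} (hN : 0 < N) :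
    {k : Fin d → ℤ | bumpProd 2 N 0 k ≠ 0}.Finite := by
  choose s _ hs using fun m => exists_fiber_finset (d := d) hN m
  refine ((offsets d).biUnion fun δ => s (-δ)).finite_toSet.subset fun k hk => ?_
  rw [Finset.mem_coe, Finset.mem_biUnion]
  exact ⟨_, bumpProd_supp le_rfl hN 0 k hk, hs _ k (by simp [latticeCutoff])⟩

theorem eventually_bumpProd_eq_one (k : Fin d → ℤ) :
    ∀ᶠ N : ℕ in atTop, bumpProd 2 N 0 k = 1 := by
  have : ∀ i, ∀ᶠ N : ℕ in atTop, |(k i : ℝ) / N| ≤ 1 := by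
    intro i
    have h1 := (tendsto_const_div_atTop_nhds_zero_nat (k i : ℝ)).abs
    rw [abs_zero] at h1
    exact h1.eventually_le_const zero_lt_one
  filter_upwards [eventually_all.2 this] with N hN
  refine Finset.prod_eq_one fun i _ => bump_eq_one ?_
  have := hN i
  simp only [Pi.zero_apply, Int.cast_zero, sub_zero]
  linarith

end lattice

theorem Solves.mono {ι : Type} {F E : Type*} [NormedAddCommGroup F] [NormedSpace ℝ F]
    [NormedAddCommGroup E] [NormedSpace ℝ E] {B : ι → ι → F →L[ℝ] E}
    {n : (ι → ℝ≥0∞) → ℝ≥0∞} {κ κ' : ℝ≥0∞} (h : Solves B n κ) (hκ : κ ≤ κ') : Solves B n κ' := by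
  intro x hx
  obtain ⟨s, hs, hsn⟩ := h x hx
  exact ⟨s, hs, hsn.trans (mul_le_mul_left hκ _)⟩

theorem exists_ultrafilter_limit {ι τ F : Type*} [NormedAddCommGroup F] [ProperSpace F]
    (l : Ultrafilter τ) {M : ℝ≥0∞} (hM : M ≠ ∞)
    {u : τ → ι → F} (hu : ∀ t k, ‖u t k‖ₑ ≤ M) :
    ∃ s : ι → F, ∀ k, Tendsto (fun t => u t k) l (𝓝 (s k)) := by
  have : ∀ k, ∃ y, Tendsto (fun t => u t k) l (𝓝 y) := by
    intro k
    obtain ⟨y, -, hy⟩ := (isCompact_closedBall (0 : F) M.toReal).ultrafilter_le_nhds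
      (l.map fun t => u t k) (by
        refine le_principal_iff.2 (Filter.univ_mem' (f := (l : Filter τ)) fun t => ?_)
        rw [Set.mem_preimage, mem_closedBall_zero_iff, ← toReal_enorm]
        exact ENNReal.toReal_mono hM (hu t k))
    exact ⟨y, hy⟩
  choose s hs using this
  exact ⟨s, hs⟩

section limits

variable {ι : Type} [AddCommGroup ι] {F E : Type*} [NormedAddCommGroup F] [NormedSpace ℝ F]
  [NormedAddCommGroup E] [NormedSpace ℝ E] [CompleteSpace E]
  {B : ι → ι → F →L[ℝ] E} {h : ι → ℝ≥0∞}

theorem tendsto_syn {τ : Type*} {l : Filter τ}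
    (hB : ∀ j k v, ‖B j k v‖ₑ ≤ h (j - k) * ‖v‖ₑ) (hh : ∑' l, h l ≠ ∞) {M : ℝ≥0∞} (hM : M ≠ ∞)
    {u : τ → ι → F} (hu : ∀ t k, ‖u t k‖ₑ ≤ M) {s : ι → F}
    (hs : ∀ k, Tendsto (fun t => u t k) l (𝓝 (s k))) (j : ι) :
    Tendsto (fun t => syn B (u t) j) l (𝓝 (syn B s j)) := by
  have hh' : ∑' k, h (j - k) ≠ ∞ := by
    rwa [← (Equiv.subLeft j).tsum_eq h] at hh
  refine tendsto_tsum_of_dominated_convergence (bound := fun k => (h (j - k) * M).toReal)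
    (ENNReal.summable_toReal ?_) (fun k => ((B j k).continuous.tendsto _).comp (hs k))
    (Eventually.of_forall fun t k => ?_)
  · rw [ENNReal.tsum_mul_right]
    exact ENNReal.mul_ne_top hh' hM
  · rw [← toReal_enorm]
    refine ENNReal.toReal_mono
      (ENNReal.mul_ne_top (ENNReal.ne_top_of_tsum_ne_top hh' k) hM) ((hB j k _).trans ?_)
    gcongr
    exact hu t k

end limits

section chains

variable {d : ℕ} {F E : Type*} [NormedAddCommGroup F] [NormedSpace ℝ F]
  [NormedAddCommGroup E] [NormedSpace ℝ E] [CompleteSpace E]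
  {B : (Fin d → ℤ) → (Fin d → ℤ) → F →L[ℝ] E} {h : (Fin d → ℤ) → ℝ≥0∞} {p q C : ℝ≥0∞}

/-- The universal constant of `solves_bootstrap`. -/
noncomputable def bootConst (d : ℕ) (C : ℝ≥0∞) : ℝ≥0∞ :=
  (offsets d).card * C * ((offsets d).card + 1) + 1

theorem bootConst_ne_top (hC : C ≠ ∞) : bootConst d C ≠ ∞ := by
  unfold bootConst
  finiteness

theorem le_bootConst : C ≤ bootConst d C := by
  have h1 : (1 : ℝ≥0∞) ≤ (offsets d).card := by
    exact_mod_cast Finset.card_pos.2 ⟨0, by simp [offsets]⟩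
  calc C = 1 * C * 1 := by ring
    _ ≤ (offsets d).card * C * ((offsets d).card + 1) := by gcongr; exact le_add_self
    _ ≤ _ := le_self_add

/-- For cutoffs of sufficiently large scale, solvability propagates between comparable norms
without loss in the constant. -/
theorem exists_scale (hp : 1 ≤ p) (hB : ∀ j k v, ‖B j k v‖ₑ ≤ h (j - k) * ‖v‖ₑ)
    (hh : ∑' l, h l ≠ ∞) (hC : C ≠ ∞) (hP : Solves B (lq p) C) :
    ∃ (N : ℕ) (hN : 0 < N), ∀ n n' : ((Fin d → ℤ) → ℝ≥0∞) → ℝ≥0∞, GoodNorm n' 1 →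
      (∀ a, lq ∞ a ≤ n' a) → ∀ a b : ℝ≥0∞, a * b ≤ 2 → b ≠ ∞ → (∀ u, n u ≤ b * n' u) →
      (∀ u, n' u ≤ a * n u) →
      Solves B ((latticeCutoff d hN).norm p n) (bootConst d C) →
      Solves B ((latticeCutoff d hN).norm p n') (bootConst d C) := by
  set A := bootConst d C with hA
  have hAt : A ≠ ∞ := bootConst_ne_top hC
  set D : ℝ≥0∞ := ((offsets d).card : ℝ≥0∞) with hD
  have hDt : D ≠ ∞ := by simp [hD]
  have hlim := tendsto_tsum_bumpModulus hh
  have h1 : Tendsto (fun N => (D + D ^ 2) * (∑' l, h l * bumpModulus N l) * (2 * A)) atTop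
      (𝓝 0) := by
    have := ENNReal.Tendsto.mul_const (b := 2 * A) (ENNReal.Tendsto.const_mul (a := D + D ^ 2) hlim
      (Or.inr (by finiteness))) (Or.inr (by finiteness))
    simpa using this
  have h2 : Tendsto (fun N => (2 * A) * ((D + D ^ 2) * (∑' l, h l * bumpModulus N l) *
      (D * (2 * A) + C * (D + 1)))) atTop (𝓝 0) := by
    have := ENNReal.Tendsto.const_mul (a := 2 * A)
      (ENNReal.Tendsto.mul_const (b := D * (2 * A) + C * (D + 1))
      (ENNReal.Tendsto.const_mul (a := D + D ^ 2) hlim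
      (Or.inr (by finiteness))) (Or.inr (by finiteness))) (Or.inr (by finiteness))
    simpa using this
  obtain ⟨N, ⟨hN1, hN2⟩, hN⟩ := (((h1.eventually_le_const zero_lt_one).and
    (h2.eventually_le_const zero_lt_one)).and (eventually_gt_atTop 0)).exists
  refine ⟨N, hN, fun n n' hn' hn'' a b hab hb hnn' hn'n hQ => ?_⟩
  refine solves_bootstrap (latticeCutoff d hN) hp hn' hn'' hB hh hC (κ := 2 * A) (by finiteness)
    hP ?_ hN1 hN2
  exact (hQ.of_equiv hb (n' := (latticeCutoff d hN).norm p n') (fun u => hnn' _)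
    (fun u => hn'n _)).mono (mul_le_mul_left hab _)

theorem cutoff_norm_lq {ι : Type} [AddCommGroup ι] (χ : Cutoff ι) (hp : 1 ≤ p) :
    χ.norm p (lq p) = lq p :=
  funext fun a => lq_lqFiber hp χ.blk a

/-- Solvability in `ℓ^p` implies solvability in `ℓ^∞`. -/
theorem solves_top [ProperSpace F] (hp : 1 ≤ p) (hB : ∀ j k v, ‖B j k v‖ₑ ≤ h (j - k) * ‖v‖ₑ)
    (hh : ∑' l, h l ≠ ∞) (hC : C ≠ ∞) (hP : Solves B (lq p) C) :
    ∃ C' : ℝ≥0∞, C' ≠ ∞ ∧ Solves B (lq ∞) C' := by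
  obtain ⟨N, hN, hstep⟩ := exists_scale hp hB hh hC hP
  set χ := latticeCutoff d hN
  set A := bootConst d C with hA
  have hAt : A ≠ ∞ := bootConst_ne_top hC
  set m : ℕ → ((Fin d → ℤ) → ℝ≥0∞) → ℝ≥0∞ := fun i a => max (lq ∞ a) ((2⁻¹) ^ i * lq p a) with hm
  have htop : ∀ a : (Fin d → ℤ) → ℝ≥0∞, lq ∞ a ≤ lq p a := fun a => by
    rw [lq_top]
    exact iSup_le fun k => le_lq hp a k
  have hgood : ∀ i, GoodNorm (m i) 1 := fun i =>
    goodNorm_max (goodNorm_lq le_top) (goodNorm_mul _ (goodNorm_lq hp))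
  have hsolve : ∀ i, Solves B (χ.norm p (m i)) A := by
    intro i
    induction i with
    | zero =>
      have : m 0 = lq p := funext fun a => by simp [hm, htop]
      rw [this, cutoff_norm_lq χ hp]
      exact hP.mono le_bootConst
    | succ i ih =>
      refine hstep (m i) (m (i + 1)) (hgood _) (fun a => le_max_left _ _) 1 2 (by simp) (by simp)
        (fun u => ?_) (fun u => ?_) ih
      · simp only [hm]
        refine max_le ?_ ?_
        · refine le_trans ?_ (mul_le_mul_right (le_max_left _ _) _)
          exact le_mul_of_one_le_left zero_le one_le_two
        · refine le_trans ?_ (mul_le_mul_right (le_max_right _ _) _)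
          rw [pow_succ', ← mul_assoc, ← mul_assoc, ENNReal.mul_inv_cancel (by simp) (by simp),
            one_mul]
      · rw [one_mul]
        refine max_le_max le_rfl (mul_le_mul_left ?_ _)
        rw [pow_succ']
        exact mul_le_of_le_one_left zero_le (by simp)
  have hmle : ∀ i a, m i a ≤ lq p a := fun i a => max_le (htop a)
    (mul_le_of_le_one_left zero_le (pow_le_one₀ zero_le (by simp)))
  refine ⟨A * N ^ d, by finiteness, fun x hx => ?_⟩
  set X := lq ∞ (fun k => ‖x k‖ₑ) with hX
  set G := lq ∞ (fun j => ‖syn B x j‖ₑ) with hG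
  have hxb : ∀ k, ‖x k‖ₑ ≤ X := le_lq le_top _
  have hGt : G ≠ ∞ := by
    refine ne_top_of_le_ne_top ?_ (((goodNorm_lq le_top).mono (enorm_syn_le hB x)).trans
      ((goodNorm_lq le_top).conv_le _ _))
    rw [one_mul]
    exact ENNReal.mul_ne_top hh hx.ne
  set ε : ℕ → ℝ≥0∞ := fun R => ∑' l, h l * bumpModulus (R + 1) l with hε
  have hεlim : Tendsto ε atTop (𝓝 0) :=
    (tendsto_add_atTop_iff_nat 1).2 (tendsto_tsum_bumpModulus hh)
  have hεle : ∀ R, ε R ≤ ∑' l, h l := fun R => ENNReal.tsum_le_tsum fun l =>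
    mul_le_of_le_one_right zero_le (ENNReal.ofReal_le_one.2 (min_le_left _ _))
  set xR : ℕ → (Fin d → ℤ) → F := fun R k => bumpProd 2 (R + 1) 0 k • x k with hxR
  have hxRb : ∀ R k, ‖xR R k‖ₑ ≤ X := fun R k =>
    (enorm_smul_le_of_mem_Icc (bumpProd_mem _ _ _ _) _).trans (hxb k)
  have hxRp : ∀ R, lq p (fun k => ‖xR R k‖ₑ) < ∞ := by
    intro R
    have hf := finite_bumpProd_support (d := d) (Nat.succ_pos R)
    refine (lq_le_tsum hp _).trans_lt ?_
    rw [tsum_eq_sum (s := hf.toFinset)]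
    · exact ENNReal.sum_lt_top.2 fun k _ => (hxRb R k).trans_lt hx
    · intro k hk
      have : bumpProd 2 (R + 1) 0 k = 0 := by
        by_contra h'
        exact hk (hf.mem_toFinset.2 h')
      simp [hxR, this]
  have hTxR : ∀ R, lq ∞ (fun j => ‖syn B (xR R) j‖ₑ) ≤ G + ε R * X := by
    intro R
    rw [lq_top]
    refine iSup_le fun j => (enorm_syn_smul_le hB hh hx.ne hxb
      (fun k => bumpProd_mem 2 (R + 1) 0 k) j).trans (add_le_add ?_ ?_)
    · refine (mul_le_of_le_one_left zero_le (enorm_le_one_of_mem_Icc (bumpProd_mem _ _ _ _))).trans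
        (le_lq le_top (fun j => ‖syn B x j‖ₑ) j)
    · simp only [hε]
      rw [← (Equiv.subLeft j).tsum_eq (fun l => h l * bumpModulus (R + 1) l),
        ← ENNReal.tsum_mul_right]
      refine ENNReal.tsum_le_tsum fun k => ?_
      rw [Equiv.subLeft_apply, mul_assoc]
      gcongr
      · exact bumpProd_lip _ _ _ _ _
      · exact hxb k
  have hsol : ∀ R, ∃ s : (Fin d → ℤ) → F, (∀ j, syn B s j = syn B (xR R) j) ∧
      ∀ k, ‖s k‖ₑ ≤ A * (N ^ d * (G + ε R * X) + ((R : ℝ≥0∞) + 1)⁻¹) := by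
    intro R
    set g := lq p (fun j => ‖syn B (xR R) j‖ₑ) with hg
    have hgt : g ≠ ∞ := by
      refine ne_top_of_le_ne_top ?_ (((goodNorm_lq hp).mono (enorm_syn_le hB (xR R))).trans
        ((goodNorm_lq hp).conv_le _ _))
      rw [one_mul]
      exact ENNReal.mul_ne_top hh (hxRp R).ne
    have hlim : Tendsto (fun i : ℕ => (2⁻¹ : ℝ≥0∞) ^ i * g) atTop (𝓝 0) := by
      have := ENNReal.Tendsto.mul_const (b := g)
        (ENNReal.tendsto_pow_atTop_nhds_zero_of_lt_one (r := 2⁻¹)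
          (by simp)) (Or.inr hgt)
      simpa using this
    obtain ⟨i, hi⟩ := (hlim.eventually_le_const
      (show (0 : ℝ≥0∞) < ((R : ℝ≥0∞) + 1)⁻¹ by simp)).exists
    obtain ⟨s, hsT, hsn⟩ := hsolve i (xR R) (((hmle i _).trans
      (lq_lqFiber hp χ.blk _).le).trans_lt (hxRp R))
    refine ⟨s, hsT, fun k => (χ.le_norm hp (fun a => le_max_left _ _) _ k).trans
      (hsn.trans (mul_le_mul_right (max_le ?_ ?_) _))⟩
    · refine le_trans ?_ le_self_add
      refine le_trans ?_ (mul_le_mul_right (hTxR R) _)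
      rw [← lq_lqFiber le_top χ.blk (fun j => ‖syn B (xR R) j‖ₑ), ← lq_const_mul le_top]
      refine lq_mono _ fun k => ?_
      obtain ⟨s, hs, hs'⟩ := exists_fiber_finset hN k
      have := lqFiber_le_card_mul hp χ.blk (fun j => ‖syn B (xR R) j‖ₑ) k s hs'
      rw [hs] at this
      exact_mod_cast this
    · refine le_trans ?_ le_add_self
      rw [lq_lqFiber hp]
      exact hi
  choose s hsT hsb using hsol
  set M := A * (N ^ d * (G + (∑' l, h l) * X) + 1) with hM
  have hXt := hx.ne
  have hMt : M ≠ ∞ := by finiteness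
  have hsM : ∀ R k, ‖s R k‖ₑ ≤ M := fun R k => (hsb R k).trans (by
    rw [hM]
    gcongr
    · exact hεle R
    · rw [ENNReal.inv_le_one]
      exact le_add_self)
  obtain ⟨y, hy⟩ := exists_ultrafilter_limit (hyperfilter ℕ) hMt hsM
  have hle : (hyperfilter ℕ : Filter ℕ) ≤ atTop := Nat.hyperfilter_le_atTop
  refine ⟨y, fun j => ?_, ?_⟩
  · have l1 := tendsto_syn hB hh hMt hsM hy j
    have l2 := tendsto_syn hB hh hx.ne hxRb (s := x) (l := atTop) (fun k => by
      have := (tendsto_add_atTop_iff_nat 1).2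
        (tendsto_const_nhds.congr' ((eventually_bumpProd_eq_one k).mono fun N hN => hN.symm) :
          Tendsto (fun N : ℕ => bumpProd 2 N 0 k) atTop (𝓝 1))
      simpa using this.smul_const (x k)) j
    simp only [hsT] at l1
    exact tendsto_nhds_unique l1 (l2.mono_left hle)
  · rw [lq_top]
    refine iSup_le fun k => ?_
    have l3 : Tendsto (fun R : ℕ => A * (N ^ d * (G + ε R * X) + ((R : ℝ≥0∞) + 1)⁻¹)) atTop
        (𝓝 (A * (N ^ d * (G + 0 * X) + 0))) := by
      refine ENNReal.Tendsto.const_mul (Tendsto.add (ENNReal.Tendsto.const_mul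
        (tendsto_const_nhds.add (ENNReal.Tendsto.mul_const hεlim (Or.inr hx.ne)))
        (Or.inr (by finiteness))) ?_) (Or.inr hAt)
      have := (tendsto_add_atTop_iff_nat 1).2 ENNReal.tendsto_inv_nat_nhds_zero
      simpa using this
    refine (le_of_tendsto_of_tendsto ((continuous_enorm.tendsto _).comp (hy k))
      (l3.mono_left hle) (Eventually.of_forall fun R => hsb R k)).trans (le_of_eq ?_)
    simp [mul_assoc]

theorem lq_ite_le_windowNorm {ι : Type} [AddCommGroup ι] [DecidableEq ι] (q : ℝ≥0∞) (S : Finset ι)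
    (a : ι → ℝ≥0∞) : lq q (fun k => if k ∈ S then a k else 0) ≤ windowNorm q S a := by
  refine le_trans (le_of_eq ?_) (le_iSup _ (0 : ι))
  simp only [sub_zero]

theorem lq_ite_blk_le (hq : 1 ≤ q) {N : ℕ} (hN : 0 < N) (S : Finset (Fin d → ℤ))
    (a : (Fin d → ℤ) → ℝ≥0∞) :
    lq q (fun k => if (latticeCutoff d hN).blk k ∈ S then a k else 0) ≤
      N ^ d * lq q (fun m => if m ∈ S then lqFiber ∞ (latticeCutoff d hN).blk a m else 0) := by
  rw [← lq_lqFiber hq (latticeCutoff d hN).blk, ← lq_const_mul hq]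
  refine lq_mono q fun k => ?_
  obtain ⟨t, ht, ht'⟩ := exists_fiber_finset hN k
  refine (lqFiber_le_card_mul hq _ _ k t ht').trans ?_
  rw [ht, Nat.cast_pow]
  refine mul_le_mul_right ?_ _
  split_ifs with hk
  · refine lqFiber_mono _ _ (fun i => ?_) k
    split_ifs
    · exact le_rfl
    · exact zero_le
  · refine (lqFiber_le_lq (b := fun _ => 0) _ _ fun i hi => ?_).trans (lq_zero le_top).le
    rw [if_neg (by rwa [hi])]

/-- Solvability in `ℓ^∞` implies solvability in `ℓ^q`. -/
theorem solves_of_solves_top [ProperSpace F] (hq : 1 ≤ q)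
    (hB : ∀ j k v, ‖B j k v‖ₑ ≤ h (j - k) * ‖v‖ₑ)
    (hh : ∑' l, h l ≠ ∞) (hC : C ≠ ∞) (hP : Solves B (lq ∞) C) :
    ∃ C' : ℝ≥0∞, C' ≠ ∞ ∧ Solves B (lq q) C' := by
  classical
  obtain ⟨N, hN, hstep⟩ := exists_scale le_top hB hh hC hP
  set χ := latticeCutoff d hN
  set A := bootConst d C with hA
  have hAt : A ≠ ∞ := bootConst_ne_top hC
  have hsolve : ∀ S : Finset (Fin d → ℤ), Solves B (χ.norm ∞ (windowNorm q (insert 0 S))) A := by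
    intro S
    induction S using Finset.induction_on with
    | empty =>
      have : windowNorm q (insert 0 (∅ : Finset (Fin d → ℤ))) = lq ∞ := funext fun a =>
        le_antisymm (windowNorm_singleton_le hq 0 a) (lq_top_le_windowNorm hq (by simp) a)
      rw [this, cutoff_norm_lq χ le_top]
      exact hP.mono le_bootConst
    | insert x S _ ih =>
      rw [Finset.insert_comm]
      refine hstep _ _ (goodNorm_windowNorm hq _) (fun a => lq_top_le_windowNorm hq (by simp) a)
        2 1 (by simp) (by simp) (fun u => ?_) (fun u => ?_) ih
      · rw [one_mul]
        exact windowNorm_mono q (Finset.subset_insert _ _) u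
      · convert windowNorm_insert_le hq (Finset.mem_insert_self 0 S) x u
  refine ⟨N ^ d * A, by finiteness, fun x hx => ?_⟩
  set G := lq q (fun j => ‖syn B x j‖ₑ) with hG
  by_cases hGt : G = ∞
  · by_cases hx0 : N ^ d * A = 0
    · have hN0 : (N : ℝ≥0∞) ^ d ≠ 0 := by positivity
      have hA0 : A ≠ 0 := by
        simp only [hA, bootConst]
        positivity
      exact absurd hx0 (mul_ne_zero hN0 hA0)
    · refine ⟨x, fun _ => rfl, ?_⟩
      rw [hGt, ENNReal.mul_top hx0]
      exact le_top
  have hamal : ∀ (u : (Fin d → ℤ) → ℝ≥0∞), lq q (lqFiber ∞ χ.blk u) ≤ lq q u := fun u =>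
    (lq_mono q fun m => lqFiber_top_le hq χ.blk u m).trans (lq_lqFiber hq χ.blk u).le
  choose s hsT hsn using fun S => hsolve S x
    ((windowNorm_le_lq q _ _).trans_lt ((hamal _).trans_lt hx))
  have hsG : ∀ S, χ.norm ∞ (windowNorm q (insert 0 S)) (fun k => ‖s S k‖ₑ) ≤ A * G := fun S =>
    (hsn S).trans (mul_le_mul_right ((windowNorm_le_lq q _ _).trans (hamal _)) _)
  have hMt : A * G ≠ ∞ := by finiteness
  have hsb : ∀ S k, ‖s S k‖ₑ ≤ A * G := fun S k => (χ.le_norm le_top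
    (fun a => lq_top_le_windowNorm hq (Finset.mem_insert_self 0 S) a) _ k).trans (hsG S)
  set l : Ultrafilter (Finset (Fin d → ℤ)) := Ultrafilter.of atTop
  obtain ⟨y, hy⟩ := exists_ultrafilter_limit l hMt hsb
  refine ⟨y, fun j => ?_, ?_⟩
  · have l1 := tendsto_syn hB hh hMt hsb hy j
    simp only [hsT] at l1
    exact tendsto_nhds_unique l1 tendsto_const_nhds
  · refine lq_le_of_tendsto hq (l := (l : Filter (Finset (Fin d → ℤ))))
      (u := fun S k => if χ.blk k ∈ insert 0 S then ‖s S k‖ₑ else 0) (fun k => ?_)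
      (Eventually.of_forall fun S => ?_)
    · refine Tendsto.congr' ?_ ((continuous_enorm.tendsto _).comp (hy k))
      have : ∀ᶠ S : Finset (Fin d → ℤ) in atTop, χ.blk k ∈ S := by
        filter_upwards [eventually_ge_atTop {χ.blk k}] with S hS
        exact hS (Finset.mem_singleton_self _)
      filter_upwards [(Ultrafilter.of_le _ : (l : Filter _) ≤ atTop) this] with S hS
      rw [if_pos (Finset.mem_insert_of_mem hS)]
      rfl
    · refine (lq_ite_blk_le hq hN _ _).trans ?_
      rw [mul_assoc]
      exact mul_le_mul_right ((lq_ite_le_windowNorm q _ _).trans (hsG S)) _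

/-- Solvability in `ℓ^p` does not depend on `p`. -/
theorem solves_independent [ProperSpace F] (hp : 1 ≤ p) (hq : 1 ≤ q)
    (hB : ∀ j k v, ‖B j k v‖ₑ ≤ h (j - k) * ‖v‖ₑ) (hh : ∑' l, h l ≠ ∞) (hC : C ≠ ∞)
    (hP : Solves B (lq p) C) : ∃ C' : ℝ≥0∞, C' ≠ ∞ ∧ Solves B (lq q) C' := by
  obtain ⟨C₁, hC₁, h₁⟩ := solves_top hp hB hh hC hP
  exact solves_of_solves_top hq hB hh hC₁ h₁

end chains

/-! ### Closed range and solvability -/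

section lpSpaces

variable {ι : Type} {G : Type*} [NormedAddCommGroup G] {p : ℝ≥0∞}

theorem memℓp_iff_lq (hp : 1 ≤ p) (f : ι → G) : Memℓp f p ↔ lq p (fun k => ‖f k‖ₑ) < ∞ := by
  by_cases hpt : p = ∞
  · subst hpt
    rw [memℓp_infty_iff, lq_top]
    constructor
    · rintro ⟨M, hM⟩
      refine (iSup_le fun k => ?_).trans_lt (ENNReal.ofReal_lt_top (r := M))
      rw [← ofReal_norm]
      exact ENNReal.ofReal_le_ofReal (hM ⟨k, rfl⟩)
    · intro h
      refine ⟨(⨆ k, ‖f k‖ₑ).toReal, ?_⟩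
      rintro _ ⟨k, rfl⟩
      simp only
      rw [← toReal_enorm]
      exact ENNReal.toReal_mono h.ne (le_iSup (fun k => ‖f k‖ₑ) k)
  · have h0 := zero_lt_one.trans_le (one_le_toReal_of_ne_top hp hpt)
    rw [memℓp_gen_iff h0, lq_of_ne_top hpt, ENNReal.rpow_lt_top_iff_of_pos (by positivity)]
    have : ∀ k, ‖f k‖ₑ ^ p.toReal = ENNReal.ofReal (‖f k‖ ^ p.toReal) := fun k => by
      rw [← ENNReal.ofReal_rpow_of_nonneg (norm_nonneg _) h0.le, ofReal_norm]
    simp only [this]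
    constructor
    · intro h
      exact lt_top_iff_ne_top.2 h.tsum_ofReal_ne_top
    · intro h
      refine (ENNReal.summable_toReal h.ne).congr fun k => ?_
      rw [ENNReal.toReal_ofReal (by positivity)]

theorem enorm_lp_eq_lq [Fact (1 ≤ p)] (hp : 1 ≤ p) (f : lp (fun _ : ι => G) p) :
    ‖f‖ₑ = lq p (fun k => ‖f k‖ₑ) := by
  by_cases hpt : p = ∞
  · subst hpt
    have hf := (memℓp_iff_lq le_top f).1 (lp.memℓp f)
    rw [lq_top] at hf ⊢
    refine le_antisymm ?_ (iSup_le fun k => ?_)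
    · rw [← ENNReal.ofReal_toReal hf.ne, ← ofReal_norm]
      refine ENNReal.ofReal_le_ofReal (lp.norm_le_of_forall_le ENNReal.toReal_nonneg fun k => ?_)
      rw [← toReal_enorm]
      exact ENNReal.toReal_mono hf.ne (le_iSup (fun k => ‖f k‖ₑ) k)
    · exact enorm_le_iff_norm_le.2 (lp.norm_apply_le_norm (by simp) f k)
  · have h0 := zero_lt_one.trans_le (one_le_toReal_of_ne_top hp hpt)
    have key : ‖f‖ₑ ^ p.toReal = ∑' k, ‖f k‖ₑ ^ p.toReal := by
      have hs := (memℓp_gen_iff h0).1 (lp.memℓp f)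
      rw [← ofReal_norm, ENNReal.ofReal_rpow_of_nonneg (norm_nonneg _) h0.le,
        lp.norm_rpow_eq_tsum h0, ENNReal.ofReal_tsum_of_nonneg (fun k => by positivity) hs]
      refine tsum_congr fun k => ?_
      rw [← ofReal_norm, ENNReal.ofReal_rpow_of_nonneg (norm_nonneg _) h0.le]
    rw [lq_of_ne_top hpt, ← key, one_div, ENNReal.rpow_rpow_inv h0.ne']

end lpSpaces

/-- The range of `syn B` on `ℓ^p` is closed in `ℓ^p`. -/
def RangeClosed {ι : Type} {F E : Type*} [NormedAddCommGroup F] [NormedSpace ℝ F]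
    [NormedAddCommGroup E] [NormedSpace ℝ E] (B : ι → ι → F →L[ℝ] E) (p : ℝ≥0∞) : Prop :=
  ∀ (y : ι → E) (x : ℕ → ι → F), (∀ n, lq p (fun k => ‖x n k‖ₑ) < ∞) →
    Tendsto (fun n => lq p fun j => ‖y j - syn B (x n) j‖ₑ) atTop (𝓝 0) →
    ∃ z : ι → F, lq p (fun k => ‖z k‖ₑ) < ∞ ∧ ∀ j, syn B z j = y j

section closedRange

variable {ι : Type} [AddCommGroup ι] {F E : Type*} [NormedAddCommGroup F] [NormedSpace ℝ F]
  [NormedAddCommGroup E] [NormedSpace ℝ E]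
  {B : ι → ι → F →L[ℝ] E} {h : ι → ℝ≥0∞} {p C : ℝ≥0∞}

theorem lq_syn_le (hp : 1 ≤ p) (hB : ∀ j k v, ‖B j k v‖ₑ ≤ h (j - k) * ‖v‖ₑ) (x : ι → F) :
    lq p (fun j => ‖syn B x j‖ₑ) ≤ (∑' l, h l) * lq p (fun k => ‖x k‖ₑ) := by
  refine ((goodNorm_lq hp).mono (enorm_syn_le hB x)).trans
    (((goodNorm_lq hp).conv_le _ _).trans (le_of_eq ?_))
  rw [one_mul]

variable [CompleteSpace E]

theorem RangeClosed.exists_solves [CompleteSpace F] (hp : 1 ≤ p)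
    (hB : ∀ j k v, ‖B j k v‖ₑ ≤ h (j - k) * ‖v‖ₑ) (hh : ∑' l, h l ≠ ∞)
    (hcl : RangeClosed B p) : ∃ C : ℝ≥0∞, C ≠ ∞ ∧ Solves B (lq p) C := by
  have : Fact (1 ≤ p) := ⟨hp⟩
  have hfin : ∀ f : lp (fun _ : ι => F) p, lq p (fun k => ‖f k‖ₑ) < ∞ := fun f =>
    (memℓp_iff_lq hp f).1 (lp.memℓp f)
  have hmem : ∀ f : lp (fun _ : ι => F) p, Memℓp (fun j => syn B f j) p := fun f =>
    (memℓp_iff_lq hp _).2 ((lq_syn_le hp hB f).trans_lt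
      (ENNReal.mul_lt_top (lt_top_iff_ne_top.2 hh) (hfin f)))
  let T₀ : lp (fun _ : ι => F) p →ₗ[ℝ] lp (fun _ : ι => E) p :=
    { toFun := fun f => ⟨fun j => syn B f j, hmem f⟩
      map_add' := fun f g => Subtype.ext (funext fun j =>
        syn_add hB hh (hfin f).ne (le_lq hp _) (hfin g).ne (le_lq hp _) j)
      map_smul' := fun c f => Subtype.ext (funext fun j => syn_smul c f j) }
  let T : lp (fun _ : ι => F) p →L[ℝ] lp (fun _ : ι => E) p :=
    T₀.mkContinuous (∑' l, h l).toReal fun f => by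
      have h1 : ‖T₀ f‖ₑ ≤ (∑' l, h l) * ‖f‖ₑ := by
        rw [enorm_lp_eq_lq hp, enorm_lp_eq_lq hp]
        exact lq_syn_le hp hB f
      rw [← toReal_enorm, ← toReal_enorm, ← ENNReal.toReal_mul]
      exact ENNReal.toReal_mono (ENNReal.mul_ne_top hh enorm_ne_top) h1
  have hT : ∀ (f : lp (fun _ : ι => F) p) j, T f j = syn B f j := fun f j => rfl
  have hrange : IsClosed (T.range : Set (lp (fun _ : ι => E) p)) := by
    refine IsSeqClosed.isClosed fun y Y hy hY => ?_
    choose x hx using hy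
    obtain ⟨z, hz, hzY⟩ := hcl Y (fun n => x n) (fun n => hfin _) (by
      have h2 := (tendsto_iff_edist_tendsto_0.1 hY)
      refine h2.congr fun n => ?_
      rw [edist_comm, edist_eq_enorm_sub, enorm_lp_eq_lq hp]
      refine congrArg _ (funext fun j => ?_)
      rw [← hx n]
      rfl)
    exact ⟨⟨z, (memℓp_iff_lq hp z).2 hz⟩, Subtype.ext (funext hzY)⟩
  have : CompleteSpace T.range := hrange.completeSpace_coe
  obtain ⟨C, hC, hsol⟩ := T.rangeRestrict.exists_preimage_norm_le
    (by exact T.toLinearMap.surjective_rangeRestrict)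
  refine ⟨ENNReal.ofReal C, ENNReal.ofReal_ne_top, fun x hx => ?_⟩
  set f : lp (fun _ : ι => F) p := ⟨x, (memℓp_iff_lq hp x).2 hx⟩ with hf
  obtain ⟨g, hg, hgn⟩ := hsol (T.rangeRestrict f)
  have hTg : T g = T f := congrArg Subtype.val hg
  refine ⟨g, fun j => ?_, ?_⟩
  · rw [← hT, hTg]
    rfl
  · have h3 : ‖g‖ ≤ C * ‖T f‖ := hgn
    have h4 : ‖g‖ₑ ≤ ENNReal.ofReal C * ‖T f‖ₑ := by
      rw [← ofReal_norm, ← ofReal_norm, ← ENNReal.ofReal_mul hC.le]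
      exact ENNReal.ofReal_le_ofReal h3
    rwa [enorm_lp_eq_lq hp, enorm_lp_eq_lq hp] at h4

theorem Solves.rangeClosed [CompleteSpace F] (hp : 1 ≤ p)
    (hB : ∀ j k v, ‖B j k v‖ₑ ≤ h (j - k) * ‖v‖ₑ) (hh : ∑' l, h l ≠ ∞) (hC : C ≠ ∞)
    (hP : Solves B (lq p) C) : RangeClosed B p := by
  intro y x hx hlim
  have hev : ∀ m : ℕ, ∃ n, lq p (fun j => ‖y j - syn B (x n) j‖ₑ) ≤ 2⁻¹ ^ m := fun m =>
    (hlim.eventually_le_const (ENNReal.pow_pos (by simp) m)).exists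
  choose φ hφ using hev
  set u : ℕ → ι → F := fun m => x (φ m)
  have hu : ∀ m, lq p (fun k => ‖u m k‖ₑ) < ∞ := fun m => hx _
  have hdiff : ∀ m, lq p (fun k => ‖u (m + 1) k - u m k‖ₑ) < ∞ := fun m =>
    ((lq_mono p fun k => enorm_sub_le).trans (lq_add_le hp _ _)).trans_lt
      (ENNReal.add_lt_top.2 ⟨hu _, hu _⟩)
  have hsub : ∀ m j, syn B (fun k => u (m + 1) k - u m k) j =
      syn B (u (m + 1)) j - syn B (u m) j := fun m j =>
    syn_sub hB hh (hu _).ne (le_lq hp _) (hu _).ne (le_lq hp _) j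
  have hsmall : ∀ m, lq p (fun j => ‖syn B (fun k => u (m + 1) k - u m k) j‖ₑ) ≤
      2 * 2⁻¹ ^ m := by
    intro m
    rw [two_mul]
    refine le_trans ((lq_mono p fun j => ?_).trans (lq_add_le hp _ _)) (add_le_add (hφ m)
      ((hφ (m + 1)).trans (pow_le_pow_of_le_one zero_le (by simp) m.le_succ)))
    rw [hsub, ← sub_sub_sub_cancel_left _ _ (y j)]
    exact enorm_sub_le
  choose s hsT hsn using fun m => hP _ (hdiff m)
  have hsn' : ∀ m, lq p (fun k => ‖s m k‖ₑ) ≤ C * (2 * 2⁻¹ ^ m) := fun m =>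
    (hsn m).trans (mul_le_mul_right (hsmall m) _)
  set S := ∑' m, lq p (fun k => ‖s m k‖ₑ) with hS
  have hSt : S ≠ ∞ := by
    refine ne_top_of_le_ne_top ?_ (ENNReal.tsum_le_tsum hsn')
    rw [ENNReal.tsum_mul_left, ENNReal.tsum_mul_left, ENNReal.tsum_geometric]
    norm_num
    finiteness
  have hsum : ∀ k, Summable fun m => s m k := fun k => Summable.of_enorm
    (ne_top_of_le_ne_top hSt (ENNReal.tsum_le_tsum fun m => le_lq hp (fun k => ‖s m k‖ₑ) k))
  set z : ι → F := fun k => u 0 k + ∑' m, s m k with hz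
  set zn : ℕ → ι → F := fun n k => u 0 k + ∑ m ∈ Finset.range n, s m k with hzn
  have hzT : ∀ n j, syn B (zn n) j = syn B (u n) j := by
    intro n j
    have hsfin : ∀ m, lq p (fun k => ‖s m k‖ₑ) ≠ ∞ := fun m =>
      ne_top_of_le_ne_top hSt (ENNReal.le_tsum m)
    rw [hzn]
    have hfs : lq p (fun k => ‖∑ m ∈ Finset.range n, s m k‖ₑ) ≠ ∞ := by
      refine ne_top_of_le_ne_top hSt ((lq_mono p fun k => enorm_sum_le _ _).trans
        ((lq_finset_sum_le hp _ _).trans (ENNReal.sum_le_tsum _)))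
    rw [syn_add hB hh (hu 0).ne (le_lq hp _) hfs (le_lq hp _),
      syn_sum hB hh _ hsfin (fun m => le_lq hp _)]
    simp only [hsT, hsub]
    rw [Finset.sum_range_sub (fun m => syn B (u m) j)]
    abel
  refine ⟨z, ?_, fun j => ?_⟩
  · refine ((lq_mono p fun k => enorm_add_le _ _).trans (lq_add_le hp _ _)).trans_lt
      (ENNReal.add_lt_top.2 ⟨hu 0, ?_⟩)
    exact ((lq_mono p fun k => enorm_tsum_le_tsum_enorm).trans (lq_tsum_le hp _)).trans_lt
      (lt_top_iff_ne_top.2 hSt)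
  · have hbd : ∀ n k, ‖zn n k‖ₑ ≤ lq p (fun k => ‖u 0 k‖ₑ) + S := fun n k => by
      refine (enorm_add_le _ _).trans (add_le_add (le_lq hp _ k) ((enorm_sum_le _ _).trans ?_))
      exact (Finset.sum_le_sum fun m _ => le_lq hp (fun k => ‖s m k‖ₑ) k).trans
        (ENNReal.sum_le_tsum _)
    have l1 := tendsto_syn hB hh (ENNReal.add_ne_top.2 ⟨(hu 0).ne, hSt⟩) hbd (s := z)
      (fun k => tendsto_const_nhds.add (hsum k).hasSum.tendsto_sum_nat) j
    simp only [hzT] at l1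
    refine tendsto_nhds_unique l1 ?_
    rw [tendsto_iff_edist_tendsto_0]
    refine tendsto_of_tendsto_of_tendsto_of_le_of_le tendsto_const_nhds
      (ENNReal.tendsto_pow_atTop_nhds_zero_of_lt_one (r := 2⁻¹) (by simp)) (fun _ => zero_le)
      fun m => ?_
    rw [edist_comm, edist_eq_enorm_sub]
    exact (le_lq hp (fun j => ‖y j - syn B (u m) j‖ₑ) j).trans (hφ m)

end closedRange

/-! ### Weakening the norm of the target space -/

theorem exists_pos_le_norm_of_injective {E E' : Type*} [NormedAddCommGroup E] [NormedSpace ℝ E]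
    [NormedAddCommGroup E'] [NormedSpace ℝ E'] (J : E →L[ℝ] E') (hJ : Function.Injective J)
    {K : Set E} (hK : IsCompact K) : ∃ c > 0, ∀ y ∈ K, 1 / 2 ≤ ‖y‖ → c ≤ ‖J y‖ := by
  have hK' : IsCompact (K ∩ {y | 1 / 2 ≤ ‖y‖}) :=
    hK.inter_right (isClosed_le continuous_const continuous_norm)
  rcases (K ∩ {y | 1 / 2 ≤ ‖y‖}).eq_empty_or_nonempty with he | hne
  · refine ⟨1, one_pos, fun y hy hy' => ?_⟩
    have : y ∈ K ∩ {y | 1 / 2 ≤ ‖y‖} := ⟨hy, hy'⟩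
    rw [he] at this
    exact absurd this (Set.notMem_empty y)
  · obtain ⟨y₀, hy₀, hmin⟩ := hK'.exists_isMinOn hne (J.continuous.norm.continuousOn)
    refine ⟨‖J y₀‖, norm_pos_iff.2 fun h0 => ?_, fun y hy hy' => hmin ⟨hy, hy'⟩⟩
    have h1 : y₀ = 0 := hJ (by rw [h0, map_zero])
    have h2 : (1 : ℝ) / 2 ≤ ‖y₀‖ := hy₀.2
    rw [h1, norm_zero] at h2
    norm_num at h2

section weaken

variable {ι : Type} {F E E' : Type*} [NormedAddCommGroup F] [NormedSpace ℝ F]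
  [NormedAddCommGroup E] [NormedSpace ℝ E] [CompleteSpace E] [NormedAddCommGroup E']
  [NormedSpace ℝ E'] {A : ι → F →L[ℝ] E} {t : ι → ι → ℝ} {α τ : ι → ℝ≥0∞} {C : ℝ≥0∞}

theorem isCompact_range_tsum [ProperSpace F] (hA : ∀ l v, ‖A l v‖ₑ ≤ α l * ‖v‖ₑ) {ρ : ι → ℝ≥0∞}
    (hρt : ∀ l, ρ l ≠ ∞) (hρ : ∑' l, α l * ρ l ≠ ∞) :
    IsCompact ((fun w : ι → F => ∑' l, A l (w l)) '' {w | ∀ l, ‖w l‖ₑ ≤ ρ l}) := by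
  have hset : {w : ι → F | ∀ l, ‖w l‖ₑ ≤ ρ l} =
      Set.univ.pi fun l => Metric.closedBall 0 (ρ l).toReal := by
    ext w
    simp only [Set.mem_ofPred_eq, Set.mem_univ_pi, mem_closedBall_zero_iff]
    refine forall_congr' fun l => ?_
    rw [← toReal_enorm, ENNReal.toReal_le_toReal enorm_ne_top (hρt l)]
  refine IsCompact.image_of_continuousOn ?_ ?_
  · rw [hset]
    exact isCompact_univ_pi fun l => isCompact_closedBall _ _
  · refine continuousOn_tsum (u := fun l => (α l * ρ l).toReal) (fun l => ?_)
      (ENNReal.summable_toReal hρ) fun l w hw => ?_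
    · exact ((A l).continuous.comp (continuous_apply l)).continuousOn
    · rw [← toReal_enorm]
      exact ENNReal.toReal_mono (ENNReal.ne_top_of_tsum_ne_top hρ l)
        ((hA l _).trans (mul_le_mul_right (hw l) _))

/-- In `ℓ^∞`, solvability is preserved when the norm of the target is weakened. -/
theorem Solves.comp_injective [AddCommGroup ι] [ProperSpace F] (hA : ∀ l v, ‖A l v‖ₑ ≤ α l * ‖v‖ₑ)
    (ht : ∀ j k, ‖t j k‖ₑ ≤ τ (j - k)) (hτ : ∀ l, τ l ≠ ∞) (hsum : ∑' l, α l * τ l ≠ ∞)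
    (hC : C ≠ ∞) (J : E →L[ℝ] E') (hJ : Function.Injective J)
    (hP : Solves (fun j k => t j k • A (j - k)) (lq ∞) C) :
    ∃ C' : ℝ≥0∞, C' ≠ ∞ ∧ Solves (fun j k => J ∘L (t j k • A (j - k))) (lq ∞) C' := by
  set B : ι → ι → F →L[ℝ] E := fun j k => t j k • A (j - k) with hBdef
  have hB : ∀ j k v, ‖B j k v‖ₑ ≤ (α (j - k) * τ (j - k)) * ‖v‖ₑ := by
    intro j k v
    simp only [hBdef, _root_.smul_apply, enorm_smul]
    calc ‖t j k‖ₑ * ‖A (j - k) v‖ₑ ≤ τ (j - k) * (α (j - k) * ‖v‖ₑ) := by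
          gcongr
          · exact ht j k
          · exact hA _ _
      _ = _ := by ring
  have hJsyn : ∀ x : ι → F, lq ∞ (fun k => ‖x k‖ₑ) < ∞ → ∀ j,
      syn (fun j k => J ∘L B j k) x j = J (syn B x j) := fun x hx j =>
    (J.map_tsum (summable_syn hB hsum hx.ne (le_lq le_top _) j)).symm
  have hρ : ∑' l, α l * (C * τ l) ≠ ∞ := by
    simp only [mul_left_comm _ C]
    rw [ENNReal.tsum_mul_left]
    exact ENNReal.mul_ne_top hC hsum
  obtain ⟨c, hc, hcJ⟩ := exists_pos_le_norm_of_injective J hJ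
    (isCompact_range_tsum hA (ρ := fun l => C * τ l) (fun l => ENNReal.mul_ne_top hC (hτ l)) hρ)
  refine ⟨C * (ENNReal.ofReal c)⁻¹, by
    have : ENNReal.ofReal c ≠ 0 := by simpa using hc
    finiteness, fun x hx => ?_⟩
  obtain ⟨s, hsT, hsn⟩ := hP x hx
  set G := lq ∞ (fun j => ‖syn B x j‖ₑ) with hG
  have hGt : G ≠ ∞ := ne_top_of_le_ne_top (ENNReal.mul_ne_top hsum hx.ne) (lq_syn_le le_top hB x)
  have hs : lq ∞ (fun k => ‖s k‖ₑ) < ∞ := hsn.trans_lt (by finiteness)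
  refine ⟨s, fun j => by rw [hJsyn s hs, hJsyn x hx, hsT], hsn.trans ?_⟩
  rw [mul_assoc]
  refine mul_le_mul_right ?_ _
  rcases eq_or_ne G 0 with hG0 | hG0
  · rw [hG0]
    exact zero_le
  obtain ⟨j, hj⟩ : ∃ j, G / 2 < ‖syn B x j‖ₑ := by
    rw [← lt_iSup_iff, ← lq_top]
    exact ENNReal.half_lt_self hG0 hGt
  set g := G.toReal with hg
  have hgpos : 0 < g := ENNReal.toReal_pos hG0 hGt
  set w : ι → F := fun l => g⁻¹ • t j (j - l) • s (j - l) with hw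
  have hgG : ‖g⁻¹‖ₑ = G⁻¹ := by
    rw [Real.enorm_of_nonneg (by positivity), ENNReal.ofReal_inv_of_pos hgpos,
      ENNReal.ofReal_toReal hGt]
  have hwρ : ∀ l, ‖w l‖ₑ ≤ C * τ l := by
    intro l
    have h1 := ht j (j - l)
    rw [_root_.sub_sub_cancel] at h1
    have h2 := (le_lq le_top (fun k => ‖s k‖ₑ) (j - l)).trans hsn
    simp only [hw, enorm_smul, hgG]
    calc G⁻¹ * (‖t j (j - l)‖ₑ * ‖s (j - l)‖ₑ) ≤ G⁻¹ * (τ l * (C * G)) := by gcongr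
      _ = (G⁻¹ * G) * (C * τ l) := by ring
      _ = C * τ l := by rw [ENNReal.inv_mul_cancel hG0 hGt, one_mul]
  have hwS : ∑' l, A l (w l) = g⁻¹ • syn B x j := by
    rw [← hsT, ← syn_smul, syn, ← (Equiv.subLeft j).tsum_eq]
    refine tsum_congr fun l => ?_
    simp only [hw, hBdef, Equiv.subLeft_apply, _root_.sub_sub_cancel, map_smul,
      _root_.smul_apply, smul_comm g⁻¹]
  have hynorm : 1 / 2 ≤ ‖g⁻¹ • syn B x j‖ := by
    have h3 : g / 2 ≤ ‖syn B x j‖ := by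
      have := ENNReal.toReal_mono enorm_ne_top hj.le
      rwa [ENNReal.toReal_div, ENNReal.toReal_ofNat, toReal_enorm] at this
    rw [norm_smul, Real.norm_of_nonneg (by positivity), inv_mul_eq_div, le_div_iff₀ hgpos]
    linarith
  have h4 := hcJ _ ⟨w, hwρ, rfl⟩ (by simpa only [hwS] using hynorm)
  simp only [hwS, map_smul, norm_smul] at h4
  rw [Real.norm_of_nonneg (by positivity), inv_mul_eq_div, le_div_iff₀ hgpos, ← hJsyn x hx] at h4
  refine le_trans ?_ (mul_le_mul_right
    (le_lq le_top (fun j => ‖syn (fun j k => J ∘L B j k) x j‖ₑ) j) _)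
  rw [← ENNReal.div_eq_inv_mul, ENNReal.le_div_iff_mul_le (Or.inl (by simpa using hc))
    (Or.inl ENNReal.ofReal_ne_top), ← ofReal_norm, ← ENNReal.ofReal_toReal hGt,
    ← ENNReal.ofReal_mul hgpos.le, mul_comm]
  exact ENNReal.ofReal_le_ofReal h4

end weaken

/-! ### Tiling by unit cubes -/

section tiling

variable {d : ℕ}

/-- Lebesgue measure on the unit cube. -/
noncomputable abbrev cubeMeasure (d : ℕ) : Measure (Fin d → ℝ) := volume.restrict cube

instance isProbabilityMeasure_cubeMeasure : IsProbabilityMeasure (cubeMeasure d) :=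
  ⟨by simp [cubeMeasure, cube, Real.volume_Icc_pi]⟩

/-- The index of the unit cube containing a point. -/
noncomputable def cellIdx (x : Fin d → ℝ) : Fin d → ℤ := fun i => ⌊x i⌋

theorem measurable_cellIdx : Measurable (cellIdx : (Fin d → ℝ) → Fin d → ℤ) :=
  measurable_pi_iff.2 fun i => Int.measurable_floor.comp (measurable_pi_apply i)

theorem measurableSet_cell (j : Fin d → ℤ) : MeasurableSet (cellIdx ⁻¹' {j}) :=
  measurable_cellIdx (measurableSet_singleton j)

theorem measurePreserving_cell (j : Fin d → ℤ) :
    MeasurePreserving (fun x => x + zc j) (cubeMeasure d) (volume.restrict (cellIdx ⁻¹' {j})) := by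
  have h1 := (measurePreserving_add_right (volume : Measure (Fin d → ℝ)) (zc j)).restrict_preimage
    (measurableSet_cell j)
  have h2 : (fun x => x + zc j) ⁻¹' (cellIdx ⁻¹' {j}) =
      Set.univ.pi fun i => Set.Ico ((0 : Fin d → ℝ) i) ((1 : Fin d → ℝ) i) := by
    ext x
    simp only [Set.mem_preimage, Set.mem_singleton_iff, Set.mem_univ_pi, Set.mem_Ico,
      Pi.zero_apply, Pi.one_apply, funext_iff, cellIdx, zc, Pi.add_apply, Int.floor_add_intCast,
      add_eq_right, Int.floor_eq_zero_iff]
  have h3 : (Set.univ.pi fun i => Set.Ico ((0 : Fin d → ℝ) i) ((1 : Fin d → ℝ) i))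
      =ᵐ[volume] (cube : Set (Fin d → ℝ)) := Measure.univ_pi_Ico_ae_eq_Icc
  rwa [h2, Measure.restrict_congr_set h3] at h1

theorem measurableEmbedding_add_zc (j : Fin d → ℤ) :
    MeasurableEmbedding fun x : Fin d → ℝ => x + zc j :=
  measurableEmbedding_addRight (zc j)

theorem volume_eq_sum_cells :
    (volume : Measure (Fin d → ℝ)) = Measure.sum fun j => volume.restrict (cellIdx ⁻¹' {j}) := by
  rw [← Measure.restrict_iUnion _ measurableSet_cell, ← Set.preimage_iUnion,
    Set.iUnion_of_singleton, Set.preimage_univ, Measure.restrict_univ]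
  intro i j hij
  exact Disjoint.preimage _ (Set.disjoint_singleton.2 hij)

theorem ae_volume_iff {P : (Fin d → ℝ) → Prop} :
    (∀ᵐ x, P x) ↔ ∀ j, ∀ᵐ x ∂cubeMeasure d, P (x + zc j) := by
  rw [volume_eq_sum_cells, Measure.ae_sum_iff]
  refine forall_congr' fun j => ?_
  rw [← (measurePreserving_cell j).map_eq, (measurableEmbedding_add_zc j).ae_map_iff]

theorem aestronglyMeasurable_volume_iff {f : (Fin d → ℝ) → ℂ} :
    AEStronglyMeasurable f volume ↔
      ∀ j, AEStronglyMeasurable (fun x => f (x + zc j)) (cubeMeasure d) := by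
  rw [volume_eq_sum_cells, aestronglyMeasurable_sum_measure_iff]
  refine forall_congr' fun j => ?_
  rw [← (measurePreserving_cell j).map_eq,
    (measurableEmbedding_add_zc j).aestronglyMeasurable_map_iff]
  rfl

theorem ae_cellIdx_add (j : Fin d → ℤ) : ∀ᵐ x ∂cubeMeasure d, cellIdx (x + zc j) = j := by
  rw [← (measurableEmbedding_add_zc j).ae_map_iff (p := fun x => cellIdx x = j),
    (measurePreserving_cell j).map_eq]
  exact ae_restrict_mem (measurableSet_cell j)

theorem eLpNorm_cell (f : (Fin d → ℝ) → ℂ) (q : ℝ≥0∞) (j : Fin d → ℤ) :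
    eLpNorm (fun x => f (x + zc j)) q (cubeMeasure d) =
      eLpNorm f q (volume.restrict (cellIdx ⁻¹' {j})) := by
  rw [← (measurePreserving_cell j).map_eq, (measurableEmbedding_add_zc j).eLpNorm_map_measure]
  rfl

theorem eLpNorm_volume_eq_lq {q : ℝ≥0∞} (hq : 1 ≤ q) (f : (Fin d → ℝ) → ℂ) :
    eLpNorm f q volume = lq q fun j => eLpNorm (fun x => f (x + zc j)) q (cubeMeasure d) := by
  simp only [eLpNorm_cell]
  by_cases hqt : q = ∞
  · subst hqt
    rw [lq_top]
    refine le_antisymm ?_ (iSup_le fun j => eLpNorm_mono_measure f Measure.restrict_le_self)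
    simp only [eLpNorm_exponent_top]
    refine eLpNormEssSup_le_of_ae_enorm_bound ?_
    nth_rewrite 2 [volume_eq_sum_cells]
    rw [Measure.ae_sum_iff]
    intro j
    filter_upwards [enorm_ae_le_eLpNormEssSup f (volume.restrict (cellIdx ⁻¹' {j}))] with x hx
    exact hx.trans (le_iSup (fun j => eLpNormEssSup f (volume.restrict (cellIdx ⁻¹' {j}))) j)
  · have h0 := zero_lt_one.trans_le (one_le_toReal_of_ne_top hq hqt)
    have hq0 : q ≠ 0 := (zero_lt_one.trans_le hq).ne'
    simp only [lq_of_ne_top hqt, eLpNorm_eq_lintegral_rpow_enorm_toReal hq0 hqt, one_div,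
      ENNReal.rpow_inv_rpow h0.ne']
    nth_rewrite 1 [volume_eq_sum_cells]
    rw [lintegral_sum_measure]

theorem amal_eq_eLpNorm (f : (Fin d → ℝ) → ℂ) (j : Fin d → ℤ) :
    amal f j = eLpNorm (fun x => f (x + zc j)) ∞ (cubeMeasure d) := by
  rw [eLpNorm_exponent_top]
  rfl

end tiling

/-! ### The synthesis operator as a matrix of operators -/

section pieces

variable {d r : ℕ} {p : ℝ≥0∞}

/-- The restriction of `f` to the `j`-th unit cube, as an element of `L^p`
(zero if it is not in `L^p`). -/
noncomputable def piece (p : ℝ≥0∞) (f : (Fin d → ℝ) → ℂ) (j : Fin d → ℤ) :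
    Lp ℂ p (cubeMeasure d) :=
  open Classical in
  if h : MemLp (fun x => f (x + zc j)) p (cubeMeasure d) then h.toLp _ else 0

theorem coeFn_piece {f : (Fin d → ℝ) → ℂ} {j : Fin d → ℤ}
    (h : MemLp (fun x => f (x + zc j)) p (cubeMeasure d)) :
    piece p f j =ᵐ[cubeMeasure d] fun x => f (x + zc j) := by
  rw [piece, dif_pos h]
  exact h.coeFn_toLp

theorem enorm_piece_le (f : (Fin d → ℝ) → ℂ) (j : Fin d → ℤ) : ‖piece p f j‖ₑ ≤ amal f j := by
  by_cases h : MemLp (fun x => f (x + zc j)) p (cubeMeasure d)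
  · rw [Lp.enorm_def, eLpNorm_congr_ae (coeFn_piece h), amal_eq_eLpNorm]
    exact eLpNorm_le_eLpNorm_of_exponent_le le_top h.1
  · rw [piece, dif_neg h, Lp.enorm_def, eLpNorm_congr_ae (Lp.coeFn_zero ℂ p _)]
    simp

/-- The map sending a coefficient vector to the corresponding combination of the generators,
restricted to the `l`-th unit cube. -/
noncomputable def blockOp (p : ℝ≥0∞) [Fact (1 ≤ p)] (Φ : Fin r → (Fin d → ℝ) → ℂ)
    (l : Fin d → ℤ) : (Fin r → ℂ) →L[ℝ] Lp ℂ p (cubeMeasure d) :=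
  ∑ i, ((ContinuousLinearMap.proj i : (Fin r → ℂ) →L[ℂ] ℂ).smulRight
    (piece p (Φ i) l)).restrictScalars ℝ

theorem blockOp_apply [Fact (1 ≤ p)] (Φ : Fin r → (Fin d → ℝ) → ℂ) (l : Fin d → ℤ)
    (v : Fin r → ℂ) : blockOp p Φ l v = ∑ i, v i • piece p (Φ i) l := by
  simp [blockOp]

theorem enorm_apply_le_enorm (v : Fin r → ℂ) (i : Fin r) : ‖v i‖ₑ ≤ ‖v‖ₑ :=
  enorm_le_iff_norm_le.2 (norm_le_pi_norm v i)

theorem enorm_pi_le_sum (v : Fin r → ℂ) : ‖v‖ₑ ≤ ∑ i, ‖v i‖ₑ := by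
  simp only [← ofReal_norm]
  rw [← ENNReal.ofReal_sum_of_nonneg fun i _ => norm_nonneg _]
  refine ENNReal.ofReal_le_ofReal ((pi_norm_le_iff_of_nonneg (by positivity)).2 fun i => ?_)
  exact Finset.single_le_sum (f := fun i => ‖v i‖) (fun i _ => norm_nonneg _) (Finset.mem_univ i)

theorem enorm_blockOp_le [Fact (1 ≤ p)] (Φ : Fin r → (Fin d → ℝ) → ℂ) (l : Fin d → ℤ)
    (v : Fin r → ℂ) : ‖blockOp p Φ l v‖ₑ ≤ (∑ i, amal (Φ i) l) * ‖v‖ₑ := by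
  rw [blockOp_apply, Finset.sum_mul]
  refine (enorm_sum_le _ _).trans (Finset.sum_le_sum fun i _ => ?_)
  rw [enorm_smul, mul_comm]
  exact mul_le_mul' (enorm_piece_le _ _) (enorm_apply_le_enorm v i)

/-- The matrix of the synthesis operator between weighted sequence spaces. -/
noncomputable def synMat (p : ℝ≥0∞) [Fact (1 ≤ p)] (μ : (Fin d → ℝ) → ℝ)
    (Φ : Fin r → (Fin d → ℝ) → ℂ) (j k : Fin d → ℤ) :
    (Fin r → ℂ) →L[ℝ] Lp ℂ p (cubeMeasure d) :=
  (μ (zc j) / μ (zc k)) • blockOp p Φ (j - k)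

/-- The coefficients `c`, multiplied by the weight. -/
noncomputable def weighted (μ : (Fin d → ℝ) → ℝ) (c : Fin r → (Fin d → ℤ) → ℂ)
    (k : Fin d → ℤ) : Fin r → ℂ :=
  fun i => (μ (zc k) : ℂ) * c i k

/-- The inclusion of `L^∞` in `L^1` of the unit cube. -/
noncomputable def topToOne (d : ℕ) : Lp ℂ ∞ (cubeMeasure d) →L[ℝ] Lp ℂ 1 (cubeMeasure d) :=
  LinearMap.mkContinuous
    { toFun := fun y => ((Lp.memLp y).mono_exponent le_top).toLp y
      map_add' := fun y z => by
        rw [← MemLp.toLp_add]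
        exact MemLp.toLp_congr _ _ (Lp.coeFn_add y z)
      map_smul' := fun c y => by
        rw [RingHom.id_apply, ← MemLp.toLp_const_smul]
        exact MemLp.toLp_congr _ _ (Lp.coeFn_smul c y) } 1 fun y => by
    rw [one_mul, ← toReal_enorm, ← toReal_enorm]
    refine ENNReal.toReal_mono enorm_ne_top ?_
    rw [LinearMap.coe_mk, AddHom.coe_mk, Lp.enorm_toLp, Lp.enorm_def]
    exact eLpNorm_le_eLpNorm_of_exponent_le le_top (Lp.aestronglyMeasurable y)

theorem coeFn_topToOne (y : Lp ℂ ∞ (cubeMeasure d)) : topToOne d y =ᵐ[cubeMeasure d] y :=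
  MemLp.coeFn_toLp ((Lp.memLp y).mono_exponent le_top)

theorem topToOne_injective : Function.Injective (topToOne d) := fun y z h => by
  refine Lp.ext ?_
  have h1 := coeFn_topToOne y
  rw [h] at h1
  exact h1.symm.trans (coeFn_topToOne z)

end pieces

section weights

variable {d r : ℕ} {p : ℝ≥0∞} {μ : (Fin d → ℝ) → ℝ}

theorem enorm_ofReal_weight (hμ : ∀ x, 0 < μ x) (x : Fin d → ℝ) :
    ‖(μ x : ℂ)‖ₑ = ENNReal.ofReal (μ x) := by
  rw [← ofReal_norm, Complex.norm_of_nonneg (hμ x).le]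

theorem lq_weighted_lt_top_iff (hp : 1 ≤ p) (hμ : ∀ x, 0 < μ x) (c : Fin r → (Fin d → ℤ) → ℂ) :
    lq p (fun k => ‖weighted μ c k‖ₑ) < ∞ ↔ ∀ i, lpW p μ (c i) < ∞ := by
  have hc : ∀ i, lpW p μ (c i) = lq p fun k => ‖weighted μ c k i‖ₑ := by
    intro i
    have : ∀ k, ‖weighted μ c k i‖ₑ = (‖c i k‖₊ : ℝ≥0∞) * ENNReal.ofReal (μ (zc k)) := by
      intro k
      rw [weighted, enorm_mul, enorm_ofReal_weight hμ, mul_comm]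
      rfl
    simp only [this]
    rfl
  simp only [hc]
  constructor
  · exact fun h i => (lq_mono p fun k => enorm_apply_le_enorm _ i).trans_lt h
  · intro h
    exact ((lq_mono p fun k => enorm_pi_le_sum _).trans (lq_finset_sum_le hp _ _)).trans_lt
      (ENNReal.sum_lt_top.2 fun i _ => h i)

theorem exists_weighted_eq (hμ : ∀ x, 0 < μ x) (u : (Fin d → ℤ) → Fin r → ℂ) :
    ∃ c, weighted μ c = u := by
  refine ⟨fun i k => u k i / μ (zc k), ?_⟩
  ext k i
  have : (μ (zc k) : ℂ) ≠ 0 := Complex.ofReal_ne_zero.2 (hμ _).ne'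
  simp only [weighted]
  field_simp

end weights

/-- A positive weight moderated by a submultiplicative one, and generators in the corresponding
amalgam space. -/
structure Admissible {d r : ℕ} (ω μ : (Fin d → ℝ) → ℝ) (C₀ : ℝ)
    (Φ : Fin r → (Fin d → ℝ) → ℂ) : Prop where
  continuous_weight : Continuous ω
  symm_weight : ∀ x, ω (-x) = ω x
  pos : ∀ x, 0 < μ x
  const_pos : 0 < C₀
  moderate : ∀ x y, μ (x + y) ≤ C₀ * ω x * μ y
  measurable : ∀ i, AEStronglyMeasurable (Φ i) volume
  amalgam : ∀ i, WW 1 ω (Φ i) < ∞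

namespace Admissible

variable {d r : ℕ} {ω μ : (Fin d → ℝ) → ℝ} {C₀ : ℝ} {Φ : Fin r → (Fin d → ℝ) → ℂ} {p : ℝ≥0∞}

theorem modulus_pos (H : Admissible ω μ C₀ Φ) (x : Fin d → ℝ) : 0 < C₀ * ω x := by
  have h1 := (H.pos (x + 0)).trans_le (H.moderate x 0)
  exact pos_of_mul_pos_left h1 (H.pos 0).le

theorem enorm_ratio_le (H : Admissible ω μ C₀ Φ) (j k : Fin d → ℤ) :
    ‖μ (zc j) / μ (zc k)‖ₑ ≤ ENNReal.ofReal (C₀ * ω (zc (j - k))) := by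
  rw [Real.enorm_of_nonneg (div_nonneg (H.pos _).le (H.pos _).le)]
  refine ENNReal.ofReal_le_ofReal ((div_le_iff₀ (H.pos _)).2 ?_)
  have : zc j = zc (j - k) + zc k := by ext i; simp [zc]
  rw [this]
  exact H.moderate _ _

theorem tsum_decay_ne_top (H : Admissible ω μ C₀ Φ) :
    ∑' l, (∑ i, amal (Φ i) l) * ENNReal.ofReal (C₀ * ω (zc l)) ≠ ∞ := by
  have hW : ∀ i, ∑' l, amal (Φ i) l * ENNReal.ofReal (ω (zc l)) ≠ ∞ := by
    intro i
    have := (H.amalgam i).ne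
    simpa [WW] using this
  have : ∀ l : Fin d → ℤ, (∑ i, amal (Φ i) l) * ENNReal.ofReal (C₀ * ω (zc l)) =
      ENNReal.ofReal C₀ * ∑ i, amal (Φ i) l * ENNReal.ofReal (ω (zc l)) := by
    intro l
    rw [ENNReal.ofReal_mul H.const_pos.le, ← Finset.sum_mul, mul_left_comm]
  simp only [this]
  rw [ENNReal.tsum_mul_left, Summable.tsum_finsetSum fun i _ => ENNReal.summable]
  exact ENNReal.mul_ne_top ENNReal.ofReal_ne_top (ENNReal.sum_ne_top.2 fun i _ => hW i)

theorem enorm_synMat_le [Fact (1 ≤ p)] (H : Admissible ω μ C₀ Φ) (j k : Fin d → ℤ)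
    (v : Fin r → ℂ) : ‖synMat p μ Φ j k v‖ₑ ≤
      (∑ i, amal (Φ i) (j - k)) * ENNReal.ofReal (C₀ * ω (zc (j - k))) * ‖v‖ₑ := by
  rw [synMat, _root_.smul_apply, enorm_smul, mul_right_comm, mul_comm]
  exact mul_le_mul' (enorm_blockOp_le Φ _ v) (H.enorm_ratio_le j k)

theorem amal_ne_top (H : Admissible ω μ C₀ Φ) (i : Fin r) (l : Fin d → ℤ) :
    amal (Φ i) l ≠ ∞ := by
  have h1 := ENNReal.ne_top_of_tsum_ne_top H.tsum_decay_ne_top l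
  have h2 : ∑ i, amal (Φ i) l ≠ ∞ := fun h => h1 <| by
    rw [h, ENNReal.top_mul (ENNReal.ofReal_pos.2 (H.modulus_pos _)).ne']
  exact ENNReal.sum_ne_top.1 h2 i (Finset.mem_univ i)

theorem memLp_generator (H : Admissible ω μ C₀ Φ) (p : ℝ≥0∞) (i : Fin r) (l : Fin d → ℤ) :
    MemLp (fun x => Φ i (x + zc l)) p (cubeMeasure d) := by
  refine MemLp.mono_exponent (q := ∞) ⟨aestronglyMeasurable_volume_iff.1 (H.measurable i) l, ?_⟩
    le_top
  rw [← amal_eq_eLpNorm]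
  exact (H.amal_ne_top i l).lt_top

theorem synMat_one_eq (H : Admissible ω μ C₀ Φ) (j k : Fin d → ℤ) :
    synMat 1 μ Φ j k = topToOne d ∘L synMat ∞ μ Φ j k := by
  have hpiece : ∀ i l, topToOne d (piece ∞ (Φ i) l) = piece 1 (Φ i) l := fun i l => Lp.ext <|
    ((coeFn_topToOne _).trans (coeFn_piece (H.memLp_generator ∞ i l))).trans
      (coeFn_piece (H.memLp_generator 1 i l)).symm
  have hsmul : ∀ (z : ℂ) y, topToOne d (z • y) = z • topToOne d y := fun z y => Lp.ext <| by
    filter_upwards [coeFn_topToOne (z • y), Lp.coeFn_smul z y, Lp.coeFn_smul z (topToOne d y),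
      coeFn_topToOne y] with x h1 h2 h3 h4
    rw [h1, h2, h3, Pi.smul_apply, Pi.smul_apply, h4]
  ext1 v
  simp only [synMat, _root_.smul_apply, ContinuousLinearMap.comp_apply, map_smul, blockOp_apply,
    map_sum, hsmul, hpiece]

theorem synMat_weighted [Fact (1 ≤ p)] (H : Admissible ω μ C₀ Φ) (c : Fin r → (Fin d → ℤ) → ℂ)
    (j k : Fin d → ℤ) : synMat p μ Φ j k (weighted μ c k) =
      ∑ i, ((μ (zc j) : ℂ) * c i k) • piece p (Φ i) (j - k) := by
  rw [synMat, _root_.smul_apply, blockOp_apply, Finset.smul_sum]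
  refine Finset.sum_congr rfl fun i _ => ?_
  have : (μ (zc k) : ℂ) ≠ 0 := Complex.ofReal_ne_zero.2 (H.pos _).ne'
  rw [RCLike.real_smul_eq_coe_smul (K := ℂ), smul_smul, weighted]
  congr 1
  simp only [Complex.coe_algebraMap, Complex.ofReal_div]
  field_simp

theorem tsum_enorm_smul_piece_ne_top [Fact (1 ≤ p)] (H : Admissible ω μ C₀ Φ)
    {c : Fin r → (Fin d → ℤ) → ℂ} {M : ℝ≥0∞} (hM : M ≠ ∞) (hc : ∀ k, ‖weighted μ c k‖ₑ ≤ M)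
    (j : Fin d → ℤ) (i : Fin r) :
    ∑' k, ‖((μ (zc j) : ℂ) * c i k) • piece p (Φ i) (j - k)‖ₑ ≠ ∞ := by
  have hle : ∀ k, ‖((μ (zc j) : ℂ) * c i k) • piece p (Φ i) (j - k)‖ₑ ≤
      (∑ i, amal (Φ i) (j - k)) * ENNReal.ofReal (C₀ * ω (zc (j - k))) * M := by
    intro k
    have h1 : (μ (zc j) : ℂ) * c i k = ((μ (zc j) / μ (zc k) : ℝ) : ℂ) * weighted μ c k i := by
      have : (μ (zc k) : ℂ) ≠ 0 := Complex.ofReal_ne_zero.2 (H.pos _).ne'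
      simp only [weighted, Complex.ofReal_div]
      field_simp
    have h2 : ‖((μ (zc j) / μ (zc k) : ℝ) : ℂ)‖ₑ = ‖μ (zc j) / μ (zc k)‖ₑ := by
      rw [← ofReal_norm, ← ofReal_norm, Complex.norm_real]
    rw [h1, enorm_smul, enorm_mul, h2, mul_comm, ← mul_assoc]
    refine mul_le_mul' (mul_le_mul' ((enorm_piece_le _ _).trans ?_) (H.enorm_ratio_le j k))
      ((enorm_apply_le_enorm _ i).trans (hc k))
    exact Finset.single_le_sum (f := fun i => amal (Φ i) (j - k)) (fun _ _ => zero_le)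
      (Finset.mem_univ i)
  refine ne_top_of_le_ne_top ?_ (ENNReal.tsum_le_tsum hle)
  rw [ENNReal.tsum_mul_right]
  refine ENNReal.mul_ne_top ?_ hM
  exact (((Equiv.subLeft j).tsum_eq
    fun l => (∑ i, amal (Φ i) l) * ENNReal.ofReal (C₀ * ω (zc l))).trans_ne H.tsum_decay_ne_top)

theorem coeFn_syn [Fact (1 ≤ p)] (H : Admissible ω μ C₀ Φ)
    {c : Fin r → (Fin d → ℤ) → ℂ} {M : ℝ≥0∞} (hM : M ≠ ∞) (hc : ∀ k, ‖weighted μ c k‖ₑ ≤ M)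
    (j : Fin d → ℤ) :
    (syn (synMat p μ Φ) (weighted μ c) j : Lp ℂ p (cubeMeasure d)) =ᵐ[cubeMeasure d]
      fun x => (μ (zc j) : ℂ) * SynOp Φ c (x + zc j) := by
  have hfin := H.tsum_enorm_smul_piece_ne_top (p := p) hM hc j
  have hsyn : syn (synMat p μ Φ) (weighted μ c) j =
      ∑ i, ∑' k, ((μ (zc j) : ℂ) * c i k) • piece p (Φ i) (j - k) := by
    simp only [syn, H.synMat_weighted]
    exact Summable.tsum_finsetSum fun i _ => Summable.of_enorm (hfin i)
  have hpiece : ∀ᵐ x ∂cubeMeasure d, ∀ i k,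
      (((μ (zc j) : ℂ) * c i k) • piece p (Φ i) (j - k) : Lp ℂ p (cubeMeasure d)) x =
        (μ (zc j) : ℂ) * c i k * Φ i (x + zc (j - k)) := by
    refine ae_all_iff.2 fun i => ae_all_iff.2 fun k => ?_
    filter_upwards [Lp.coeFn_smul ((μ (zc j) : ℂ) * c i k) (piece p (Φ i) (j - k)),
      coeFn_piece (H.memLp_generator p i (j - k))] with x h1 h2
    rw [h1, Pi.smul_apply, h2, smul_eq_mul]
  rw [hsyn]
  filter_upwards [Lp.coeFn_finsetSum Finset.univ
      fun i => ∑' k, ((μ (zc j) : ℂ) * c i k) • piece p (Φ i) (j - k), hpiece,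
    ae_all_iff.2 fun i => Lp.coeFn_tsum (hfin i)] with x h1 h2 h3
  rw [h1, Finset.sum_apply, SynOp, Finset.mul_sum]
  refine Finset.sum_congr rfl fun i _ => ?_
  rw [h3 i, ← tsum_mul_left]
  refine tsum_congr fun k => ?_
  have : x + zc j - zc k = x + zc (j - k) := by ext i; simp [zc, add_sub_assoc]
  rw [h2 i k, this, mul_assoc]

theorem aestronglyMeasurable_synOp (H : Admissible ω μ C₀ Φ)
    {c : Fin r → (Fin d → ℤ) → ℂ} {M : ℝ≥0∞} (hM : M ≠ ∞) (hc : ∀ k, ‖weighted μ c k‖ₑ ≤ M) :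
    AEStronglyMeasurable (SynOp Φ c) volume := by
  refine aestronglyMeasurable_volume_iff.2 fun j => ?_
  have h1 := (Lp.aestronglyMeasurable (syn (synMat 1 μ Φ) (weighted μ c) j)).congr
    (H.coeFn_syn hM hc j)
  have hj : (μ (zc j) : ℂ) ≠ 0 := Complex.ofReal_ne_zero.2 (H.pos _).ne'
  refine (h1.const_mul (μ (zc j) : ℂ)⁻¹).congr (Eventually.of_forall fun x => ?_)
  simp only
  rw [inv_mul_cancel_left₀ hj]

theorem enorm_eq_of_ae [Fact (1 ≤ p)] (H : Admissible ω μ C₀ Φ) {f : (Fin d → ℝ) → ℂ}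
    {j : Fin d → ℤ} {y : Lp ℂ p (cubeMeasure d)}
    (hy : y =ᵐ[cubeMeasure d] fun x => (μ (zc j) : ℂ) * f (x + zc j)) :
    ‖y‖ₑ = ENNReal.ofReal (μ (zc j)) * eLpNorm (fun x => f (x + zc j)) p (cubeMeasure d) := by
  rw [Lp.enorm_def, eLpNorm_congr_ae hy, ← enorm_ofReal_weight H.pos]
  exact eLpNorm_const_smul (μ (zc j) : ℂ) (fun x => f (x + zc j)) p _

/-- If `y` is given by the pieces of `f`, its distance to the image of the coefficients `c` is
computed from the pieces of `f - SynOp Φ c`. -/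
theorem enorm_sub_syn [Fact (1 ≤ p)] (H : Admissible ω μ C₀ Φ)
    {c : Fin r → (Fin d → ℤ) → ℂ} {M : ℝ≥0∞} (hM : M ≠ ∞) (hc : ∀ k, ‖weighted μ c k‖ₑ ≤ M)
    {f g : (Fin d → ℝ) → ℂ} (hg : g =ᵐ[volume] SynOp Φ c) {j : Fin d → ℤ}
    {y : Lp ℂ p (cubeMeasure d)}
    (hy : y =ᵐ[cubeMeasure d] fun x => (μ (zc j) : ℂ) * f (x + zc j)) :
    ‖y - syn (synMat p μ Φ) (weighted μ c) j‖ₑ =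
      ENNReal.ofReal (μ (zc j)) * eLpNorm (fun x => (f - g) (x + zc j)) p (cubeMeasure d) := by
  refine H.enorm_eq_of_ae ?_
  filter_upwards [Lp.coeFn_sub y (syn (synMat p μ Φ) (weighted μ c) j), hy,
    H.coeFn_syn (p := p) hM hc j, ae_volume_iff.1 hg j] with x h1 h2 h3 h4
  rw [h1, Pi.sub_apply, h2, h3, Pi.sub_apply, h4, mul_sub]

theorem exists_weight_comparison (H : Admissible ω μ C₀ Φ) : ∃ K : ℝ, ∀ (j : Fin d → ℤ),
    ∀ x ∈ cube, μ (x + zc j) ≤ K * μ (zc j) ∧ μ (zc j) ≤ K * μ (x + zc j) := by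
  obtain ⟨M, hM⟩ := (isCompact_Icc (a := (0 : Fin d → ℝ)) (b := 1)).bddAbove_image
    H.continuous_weight.continuousOn
  refine ⟨C₀ * M, fun j x hx => ?_⟩
  have hx' : C₀ * ω x ≤ C₀ * M :=
    mul_le_mul_of_nonneg_left (hM (Set.mem_image_of_mem ω hx)) H.const_pos.le
  refine ⟨(H.moderate x (zc j)).trans (mul_le_mul_of_nonneg_right hx' (H.pos _).le), ?_⟩
  have h := H.moderate (-x) (x + zc j)
  rw [neg_add_cancel_left, H.symm_weight] at h
  exact h.trans (mul_le_mul_of_nonneg_right hx' (H.pos _).le)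

theorem WW_eq_lq (μ : (Fin d → ℝ) → ℝ) (f : (Fin d → ℝ) → ℂ) :
    WW p μ f = lq p fun j =>
      ENNReal.ofReal (μ (zc j)) * eLpNorm (fun x => f (x + zc j)) ∞ (cubeMeasure d) := by
  simp only [← amal_eq_eLpNorm, mul_comm (ENNReal.ofReal _)]
  rfl

theorem exists_lq_le_LpW (H : Admissible ω μ C₀ Φ) : ∃ K : ℝ≥0∞, K ≠ ∞ ∧ ∀ {q : ℝ≥0∞}, 1 ≤ q →
    ∀ {f : (Fin d → ℝ) → ℂ}, AEStronglyMeasurable f volume →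
      lq q (fun j => ENNReal.ofReal (μ (zc j)) *
        eLpNorm (fun x => f (x + zc j)) 1 (cubeMeasure d)) ≤ K * LpW q μ f := by
  obtain ⟨K, hK⟩ := H.exists_weight_comparison
  refine ⟨ENNReal.ofReal K, ENNReal.ofReal_ne_top, fun {q} hq {f} hf => ?_⟩
  rw [LpW, eLpNorm_volume_eq_lq hq, ← lq_const_mul hq]
  refine lq_mono q fun j => ?_
  calc ENNReal.ofReal (μ (zc j)) * eLpNorm (fun x => f (x + zc j)) 1 (cubeMeasure d)
      ≤ ‖(μ (zc j) : ℂ)‖ₑ * eLpNorm (fun x => f (x + zc j)) q (cubeMeasure d) := by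
        rw [enorm_ofReal_weight H.pos]
        exact mul_le_mul_right
          (eLpNorm_le_eLpNorm_of_exponent_le hq (aestronglyMeasurable_volume_iff.1 hf j)) _
    _ = eLpNorm ((μ (zc j) : ℂ) • fun x => f (x + zc j)) q (cubeMeasure d) :=
        (eLpNorm_const_smul _ _ _ _).symm
    _ ≤ _ := by
        refine eLpNorm_le_mul_eLpNorm_of_ae_le_mul ?_ q
        filter_upwards [ae_restrict_mem measurableSet_Icc] with x hx
        rw [Pi.smul_apply, norm_smul, norm_smul, ← mul_assoc, Complex.norm_of_nonneg (H.pos _).le,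
          Real.norm_of_nonneg (H.pos _).le]
        exact mul_le_mul_of_nonneg_right (hK j x hx).2 (norm_nonneg _)

theorem exists_LpW_le_WW (H : Admissible ω μ C₀ Φ) : ∃ K : ℝ≥0∞, K ≠ ∞ ∧ ∀ {q : ℝ≥0∞}, 1 ≤ q →
    ∀ {f : (Fin d → ℝ) → ℂ}, AEStronglyMeasurable f volume → LpW q μ f ≤ K * WW q μ f := by
  obtain ⟨K, hK⟩ := H.exists_weight_comparison
  refine ⟨ENNReal.ofReal K, ENNReal.ofReal_ne_top, fun {q} hq {f} hf => ?_⟩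
  rw [LpW, eLpNorm_volume_eq_lq hq, WW_eq_lq, ← lq_const_mul hq]
  refine lq_mono q fun j => ?_
  calc eLpNorm (fun x => μ (x + zc j) • f (x + zc j)) q (cubeMeasure d)
      ≤ ENNReal.ofReal K *
          eLpNorm ((μ (zc j) : ℂ) • fun x => f (x + zc j)) q (cubeMeasure d) := by
        refine eLpNorm_le_mul_eLpNorm_of_ae_le_mul ?_ q
        filter_upwards [ae_restrict_mem measurableSet_Icc] with x hx
        rw [Pi.smul_apply, norm_smul, norm_smul, ← mul_assoc, Complex.norm_of_nonneg (H.pos _).le,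
          Real.norm_of_nonneg (H.pos _).le]
        exact mul_le_mul_of_nonneg_right (hK j x hx).1 (norm_nonneg _)
    _ ≤ _ := by
        rw [eLpNorm_const_smul, enorm_ofReal_weight H.pos]
        exact mul_le_mul_right (mul_le_mul_right
          (eLpNorm_le_eLpNorm_of_exponent_le le_top (aestronglyMeasurable_volume_iff.1 hf j)) _) _

theorem lq_le_WW {f : (Fin d → ℝ) → ℂ} (hf : AEStronglyMeasurable f volume) :
    lq p (fun j => ENNReal.ofReal (μ (zc j)) *
      eLpNorm (fun x => f (x + zc j)) 1 (cubeMeasure d)) ≤ WW p μ f := by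
  rw [WW_eq_lq]
  exact lq_mono p fun j => mul_le_mul_right
    (eLpNorm_le_eLpNorm_of_exponent_le le_top (aestronglyMeasurable_volume_iff.1 hf j)) _

/-- Coefficients of finite norm are bounded. -/
theorem enorm_weighted_le (hp : 1 ≤ p) (c : Fin r → (Fin d → ℤ) → ℂ) (k : Fin d → ℤ) :
    ‖weighted μ c k‖ₑ ≤ lq p fun k => ‖weighted μ c k‖ₑ :=
  le_lq hp (fun k => ‖weighted μ c k‖ₑ) k

theorem mem_VSI_of_rangeClosed {q : ℝ≥0∞} (hq : 1 ≤ q) (H : Admissible ω μ C₀ Φ)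
    (hR : RangeClosed (synMat 1 μ Φ) q) {f : (Fin d → ℝ) → ℂ} (hf : AEStronglyMeasurable f volume)
    (hfin : LpW q μ f < ∞) {F : ℕ → (Fin d → ℝ) → ℂ} (hF : ∀ n, F n ∈ VSI q μ Φ)
    (hlim : Tendsto (fun n => lq q fun j => ENNReal.ofReal (μ (zc j)) *
      eLpNorm (fun x => (f - F n) (x + zc j)) 1 (cubeMeasure d)) atTop (𝓝 0)) :
    f ∈ VSI q μ Φ := by
  obtain ⟨K, hK, hle⟩ := H.exists_lq_le_LpW
  have hmem : ∀ j, MemLp (fun x => f (x + zc j)) 1 (cubeMeasure d) := fun j => by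
    refine ⟨aestronglyMeasurable_volume_iff.1 hf j, ?_⟩
    have h1 := ((le_lq hq _ j).trans (hle hq hf)).trans_lt (ENNReal.mul_lt_top hK.lt_top hfin)
    exact ENNReal.lt_top_of_mul_ne_top_right h1.ne (ENNReal.ofReal_pos.2 (H.pos _)).ne'
  have hy : ∀ j, (((μ (zc j) : ℂ) • piece 1 f j : Lp ℂ 1 (cubeMeasure d))
      =ᵐ[cubeMeasure d] fun x => (μ (zc j) : ℂ) * f (x + zc j)) := fun j => by
    filter_upwards [Lp.coeFn_smul (μ (zc j) : ℂ) (piece 1 f j), coeFn_piece (hmem j)] with x h1 h2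
    rw [h1, Pi.smul_apply, h2, smul_eq_mul]
  choose _ _ c hc hFc using hF
  have hcfin : ∀ n, lq q (fun k => ‖weighted μ (c n) k‖ₑ) < ∞ := fun n =>
    (lq_weighted_lt_top_iff hq H.pos _).2 (hc n)
  obtain ⟨z, hz, hzy⟩ := hR (fun j => (μ (zc j) : ℂ) • piece 1 f j)
    (fun n => weighted μ (c n)) hcfin
    (by simpa only [fun n j =>
      H.enorm_sub_syn (hcfin n).ne (enorm_weighted_le hq (c n)) (hFc n) (hy j)] using hlim)
  obtain ⟨b, rfl⟩ := exists_weighted_eq H.pos z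
  refine ⟨hf, hfin, b, (lq_weighted_lt_top_iff hq H.pos _).1 hz, ae_volume_iff.2 fun j => ?_⟩
  have h1 := H.coeFn_syn (p := 1) hz.ne (enorm_weighted_le hq b) j
  rw [hzy j] at h1
  filter_upwards [h1, hy j] with x h2 h3
  have hj : (μ (zc j) : ℂ) ≠ 0 := Complex.ofReal_ne_zero.2 (H.pos _).ne'
  exact mul_left_cancel₀ hj (h3.symm.trans h2)

theorem vClosed_of_rangeClosed {q : ℝ≥0∞} (hq : 1 ≤ q) (H : Admissible ω μ C₀ Φ)
    (hR : RangeClosed (synMat 1 μ Φ) q) : VClosedL q μ Φ ∧ VClosedW q μ Φ := by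
  constructor
  · intro f hf hfin F hF hlim
    obtain ⟨K, hK, hle⟩ := H.exists_lq_le_LpW
    refine H.mem_VSI_of_rangeClosed hq hR hf hfin hF ?_
    refine tendsto_of_tendsto_of_tendsto_of_le_of_le tendsto_const_nhds ?_ (fun _ => zero_le)
      fun n => hle hq (hf.sub (hF n).1)
    simpa using ENNReal.Tendsto.const_mul hlim (Or.inr hK)
  · intro f hf hfin F hF hlim
    obtain ⟨K, hK, hle⟩ := H.exists_LpW_le_WW
    refine H.mem_VSI_of_rangeClosed hq hR hf
      ((hle hq hf).trans_lt (ENNReal.mul_lt_top hK.lt_top hfin)) hF ?_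
    exact tendsto_of_tendsto_of_tendsto_of_le_of_le tendsto_const_nhds hlim (fun _ => zero_le)
      fun n => lq_le_WW (hf.sub (hF n).1)

/-- The function whose pieces are the given ones, divided by the weight. -/
noncomputable def glue (μ : (Fin d → ℝ) → ℝ) (y : (Fin d → ℤ) → Lp ℂ ∞ (cubeMeasure d))
    (x : Fin d → ℝ) : ℂ :=
  (μ (zc (cellIdx x)) : ℂ)⁻¹ * y (cellIdx x) (x - zc (cellIdx x))

theorem glue_add_ae (y : (Fin d → ℤ) → Lp ℂ ∞ (cubeMeasure d)) (j : Fin d → ℤ) :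
    ∀ᵐ x ∂cubeMeasure d, glue μ y (x + zc j) = (μ (zc j) : ℂ)⁻¹ * y j x := by
  filter_upwards [ae_cellIdx_add j] with x hx
  rw [glue, hx, add_sub_cancel_right]

theorem rangeClosed_of_vClosedW (hp : 1 ≤ p) (H : Admissible ω μ C₀ Φ) (hW : VClosedW p μ Φ) :
    RangeClosed (synMat ∞ μ Φ) p := by
  intro y x hx hlim
  choose c hc using fun n => exists_weighted_eq H.pos (x n)
  obtain rfl : (fun n => weighted μ (c n)) = x := funext hc
  clear hc
  have hpos : ∀ j : Fin d → ℤ, (μ (zc j) : ℂ) ≠ 0 := fun j =>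
    Complex.ofReal_ne_zero.2 (H.pos _).ne'
  have hbd := fun n => enorm_weighted_le (μ := μ) hp (c n)
  have hy : ∀ j, y j =ᵐ[cubeMeasure d] fun x => (μ (zc j) : ℂ) * glue μ y (x + zc j) := fun j => by
    filter_upwards [glue_add_ae (μ := μ) y j] with x hx
    rw [hx, mul_inv_cancel_left₀ (hpos j)]
  have hmeas : AEStronglyMeasurable (glue μ y) volume := aestronglyMeasurable_volume_iff.2 fun j =>
    ((Lp.aestronglyMeasurable (y j)).const_mul (μ (zc j) : ℂ)⁻¹).congr
      ((glue_add_ae y j).mono fun _ h => h.symm)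
  have hsub : ∀ n, WW p μ (glue μ y - SynOp Φ (c n)) =
      lq p fun j => ‖y j - syn (synMat ∞ μ Φ) (weighted μ (c n)) j‖ₑ := fun n => by
    rw [WW_eq_lq]
    simp only [fun j => H.enorm_sub_syn (hx n).ne (hbd n) EventuallyEq.rfl (hy j)]
  have hsynfin : ∀ n, lq p (fun j => ‖syn (synMat ∞ μ Φ) (weighted μ (c n)) j‖ₑ) < ∞ := fun n =>
    (lq_syn_le hp H.enorm_synMat_le _).trans_lt
      (ENNReal.mul_lt_top H.tsum_decay_ne_top.lt_top (hx n))
  have hglue : WW p μ (glue μ y) < ∞ := by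
    obtain ⟨n, hn⟩ := (hlim.eventually (gt_mem_nhds ENNReal.zero_lt_top)).exists
    rw [WW_eq_lq]
    simp only [← fun j => H.enorm_eq_of_ae (hy j)]
    refine lt_of_le_of_lt ?_ (ENNReal.add_lt_top.2 ⟨hn, hsynfin n⟩)
    refine (lq_mono p fun j => ?_).trans (lq_add_le hp _ _)
    simpa using enorm_add_le (y j - syn (synMat ∞ μ Φ) (weighted μ (c n)) j)
      (syn (synMat ∞ μ Φ) (weighted μ (c n)) j)
  have hmem : ∀ n, SynOp Φ (c n) ∈ VSI p μ Φ := fun n => by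
    obtain ⟨K, hK, hle⟩ := H.exists_LpW_le_WW
    have hm := H.aestronglyMeasurable_synOp (hx n).ne (hbd n)
    refine ⟨hm, (hle hp hm).trans_lt (ENNReal.mul_lt_top hK.lt_top ?_), c n,
      (lq_weighted_lt_top_iff hp H.pos _).1 (hx n), EventuallyEq.rfl⟩
    rw [WW_eq_lq]
    simpa only [fun j => H.enorm_eq_of_ae (H.coeFn_syn (p := ∞) (hx n).ne (hbd n) j)]
      using hsynfin n
  obtain ⟨_, _, b, hb, hbeq⟩ := hW (glue μ y) hmeas hglue (fun n => SynOp Φ (c n)) hmem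
    (by simpa only [hsub] using hlim)
  have hbfin := (lq_weighted_lt_top_iff hp H.pos b).2 hb
  refine ⟨weighted μ b, hbfin, fun j => Lp.ext ?_⟩
  filter_upwards [H.coeFn_syn (p := ∞) hbfin.ne (enorm_weighted_le hp b) j, hy j,
    ae_volume_iff.1 hbeq j] with x h1 h2 h3
  rw [h1, h2, h3]

theorem rangeClosed_independent {p q : ℝ≥0∞} (hp : 1 ≤ p) (hq : 1 ≤ q) (H : Admissible ω μ C₀ Φ)
    (hR : RangeClosed (synMat ∞ μ Φ) p) : RangeClosed (synMat 1 μ Φ) q := by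
  obtain ⟨C, hC, hS⟩ := hR.exists_solves hp H.enorm_synMat_le H.tsum_decay_ne_top
  obtain ⟨C', hC', hS'⟩ := solves_independent hp le_top H.enorm_synMat_le H.tsum_decay_ne_top hC hS
  obtain ⟨D, hD, hT⟩ := Solves.comp_injective (enorm_blockOp_le Φ) H.enorm_ratio_le
    (fun _ => ENNReal.ofReal_ne_top) H.tsum_decay_ne_top hC' (topToOne d) topToOne_injective hS'
  have hcomp : (fun j k => topToOne d ∘L ((μ (zc j) / μ (zc k)) • blockOp ∞ Φ (j - k))) =
      synMat 1 μ Φ := by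
    ext1 j
    ext1 k
    exact (H.synMat_one_eq j k).symm
  rw [hcomp] at hT
  obtain ⟨D', hD', hT'⟩ := solves_independent le_top hq H.enorm_synMat_le H.tsum_decay_ne_top hD hT
  exact hT'.rangeClosed hq H.enorm_synMat_le H.tsum_decay_ne_top hD'

end Admissible

section zeroWeight

variable {d r : ℕ} {p q : ℝ≥0∞}

theorem lpW_zero_weight (hp : 1 ≤ p) (c : (Fin d → ℤ) → ℂ) : lpW p 0 c = 0 := by
  refine Eq.trans ?_ (lq_zero (ι := Fin d → ℤ) hp)
  simp [lpW, lq]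

theorem WW_zero_weight (hp : 1 ≤ p) (f : (Fin d → ℝ) → ℂ) : WW p 0 f = 0 := by
  refine Eq.trans ?_ (lq_zero (ι := Fin d → ℤ) hp)
  simp [WW, lq]

theorem LpW_zero_weight (p : ℝ≥0∞) (f : (Fin d → ℝ) → ℂ) : LpW p 0 f = 0 := by
  simp [LpW]

theorem VSI_zero_weight (hp : 1 ≤ p) (hq : 1 ≤ q) (Φ : Fin r → (Fin d → ℝ) → ℂ) :
    VSI p 0 Φ = VSI q 0 Φ := by
  simp only [VSI, LpW_zero_weight, lpW_zero_weight hp, lpW_zero_weight hq]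

theorem VClosedL_zero_weight (hp : 1 ≤ p) (hq : 1 ≤ q) {Φ : Fin r → (Fin d → ℝ) → ℂ}
    (h : VClosedL p 0 Φ) : VClosedL q 0 Φ := by
  simpa only [VClosedL, VSI_zero_weight hp hq, LpW_zero_weight] using h

theorem VClosedW_zero_weight (hp : 1 ≤ p) (hq : 1 ≤ q) {Φ : Fin r → (Fin d → ℝ) → ℂ}
    (h : VClosedW p 0 Φ) : VClosedW q 0 Φ := by
  simpa only [VClosedW, VSI_zero_weight hp hq, WW_zero_weight hp, WW_zero_weight hq] using h

end zeroWeight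

end ShiftInvariant

/-- Corollary 3.10 ii: if `V^{p₀}_μ(Φ)` is closed in `L^{p₀}_μ` and
`W^{p₀}_μ` for some `p₀ ∈ [1,∞]`, then `V^p_μ(Φ)` is closed in `L^p_μ` and `W^p_μ`
for every `p ∈ [1,∞]`. -/
theorem closedness_independent_of_p {d r : ℕ} (ω μ : (Fin d → ℝ) → ℝ)
    (hω : IsWeight ω) (hμ : IsModerate ω μ)
    (Φ : Fin r → (Fin d → ℝ) → ℂ)
    (hm : ∀ i, AEStronglyMeasurable (Φ i) volume)
    (hΦ : ∀ i, WW 1 ω (Φ i) < ∞)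
    (p₀ : ℝ≥0∞) (hp₀ : 1 ≤ p₀)
    (hclosed : VClosedL p₀ μ Φ ∧ VClosedW p₀ μ Φ) :
    ∀ p : ℝ≥0∞, 1 ≤ p → VClosedL p μ Φ ∧ VClosedW p μ Φ := by
  intro p hp
  obtain ⟨hμ0, C₀, hC₀, hmod⟩ := hμ
  by_cases hpos : ∀ x, 0 < μ x
  · have H : ShiftInvariant.Admissible ω μ C₀ Φ :=
      ⟨hω.1, hω.2.1, hpos, hC₀, hmod, hm, hΦ⟩
    exact H.vClosed_of_rangeClosed hp
      (H.rangeClosed_independent hp₀ hp (H.rangeClosed_of_vClosedW hp₀ hclosed.2))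
  · push Not at hpos
    obtain ⟨a, ha⟩ := hpos
    obtain rfl : μ = 0 := funext fun x => le_antisymm (by
      simpa [le_antisymm ha (hμ0 a)] using hmod (x - a) a) (hμ0 x)
    exact ⟨ShiftInvariant.VClosedL_zero_weight hp₀ hp hclosed.1,
      ShiftInvariant.VClosedW_zero_weight hp₀ hp hclosed.2⟩
end

section
/- Let Φ = (φ_i, φ_{i+1}, …, φ_{i+r}) with i ∈ ℤ and r an odd natural number (so Φ consists of an even number r+1 of successive functions φ_k). Then the function ξ ↦ rank[Φ̂(ξ+2jπ)_{j∈ℤ}] is not a constant function on ℝ. -/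
open MeasureTheory Filter Topology ENNReal Real

noncomputable section

/-- weighted `ℓ^p_ν` norm of a sequence on `ℤ` -/
def lpW1 (p : ℝ≥0∞) (ν : ℝ → ℝ) (c : ℤ → ℂ) : ℝ≥0∞ :=
  if p = ∞ then ⨆ j, (‖c j‖₊ : ℝ≥0∞) * ENNReal.ofReal (ν j)
  else (∑' j : ℤ, ((‖c j‖₊ : ℝ≥0∞) * ENNReal.ofReal (ν j)) ^ p.toReal) ^ (1 / p.toReal)

/-- weighted `L^p_ν` norm -/
def LpW1 (p : ℝ≥0∞) (ν : ℝ → ℝ) (f : ℝ → ℂ) : ℝ≥0∞ :=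
  eLpNorm (fun x => ν x • f x) p volume

/-- a weight on `ℝ`: continuous, symmetric, nonnegative, submultiplicative -/
def IsWeight1 (ω : ℝ → ℝ) : Prop :=
  Continuous ω ∧ (∀ x, ω (-x) = ω x) ∧ (∀ x, 0 ≤ ω x) ∧ ∀ x y, ω (x + y) ≤ ω x * ω y

/-- `μ` is an `ω`-moderate weight on `ℝ` -/
def IsModerate1 (ω μ : ℝ → ℝ) : Prop :=
  (∀ x, 0 ≤ μ x) ∧ ∃ C₀ > 0, ∀ x y, μ (x + y) ≤ C₀ * ω x * μ y

/-- the synthesis operator `S_Φ` on `ℝ` -/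
def SynOp1 {r : ℕ} (Φ : Fin r → ℝ → ℂ) (c : Fin r → ℤ → ℂ) : ℝ → ℂ :=
  fun x => ∑ s, ∑' j : ℤ, c s j * Φ s (x - j)

/-- the weighted shift-invariant space `V^p_μ(Φ)` on `ℝ` -/
def VSI1 {r : ℕ} (p : ℝ≥0∞) (μ : ℝ → ℝ) (Φ : Fin r → ℝ → ℂ) : Set (ℝ → ℂ) :=
  {f | AEStronglyMeasurable f volume ∧ LpW1 p μ f < ∞ ∧
    ∃ c : Fin r → ℤ → ℂ, (∀ s, lpW1 p μ (c s) < ∞) ∧ f =ᵐ[volume] SynOp1 Φ c}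

/-- `{φ_{k_s}(·-j)}` is a `p`-frame for `V^p_μ(Φ)` -/
def PFrame1 {r : ℕ} (p : ℝ≥0∞) (μ : ℝ → ℝ) (Φ : Fin r → ℝ → ℂ) : Prop :=
  ∃ C : ℝ≥0∞, 0 < C ∧ C < ∞ ∧ ∀ f ∈ VSI1 p μ Φ,
    C⁻¹ * LpW1 p μ f ≤ ∑ s, lpW1 p μ (fun j => ∫ x, f x * Φ s (x - j)) ∧
      ∑ s, lpW1 p μ (fun j => ∫ x, f x * Φ s (x - j)) ≤ C * LpW1 p μ f

/-- `V^p_μ(Φ)` is closed in `L^p_μ` -/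
def VClosedL1 {r : ℕ} (p : ℝ≥0∞) (μ : ℝ → ℝ) (Φ : Fin r → ℝ → ℂ) : Prop :=
  ∀ f : ℝ → ℂ, AEStronglyMeasurable f volume → LpW1 p μ f < ∞ →
    ∀ F : ℕ → ℝ → ℂ, (∀ n, F n ∈ VSI1 p μ Φ) →
      Tendsto (fun n => LpW1 p μ (f - F n)) atTop (𝓝 0) → f ∈ VSI1 p μ Φ

/-- the rank of `[Φ̂(ξ+2jπ)]_{j∈ℤ}` for the family `φ̂_{k_s}(ξ) = θ(ξ + k_s π)` -/
def rankθ {m : ℕ} (θ : ℝ → ℝ) (k : Fin m → ℤ) (ξ : ℝ) : ℕ :=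
  Module.finrank ℂ (Submodule.span ℂ
    (Set.range fun j : ℤ => fun s : Fin m => (θ (ξ + k s * π + 2 * j * π) : ℂ)))

/-- inverse Fourier transform, for the convention `φ̂(ξ) = ∫ φ(x) e^{-i x ξ} dx` -/
def invFT (g : ℝ → ℂ) (x : ℝ) : ℂ :=
  (1 / (2 * π) : ℝ) • ∫ ξ : ℝ, g ξ * Complex.exp (Complex.I * x * ξ)

/-- the generator `φ_k = F^{-1}(θ(·+kπ))` -/
def genφ (θ : ℝ → ℝ) (k : ℤ) : ℝ → ℂ :=
  invFT fun ξ => (θ (ξ + k * π) : ℂ)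

end

open MeasureTheory Filter Topology ENNReal Real

/-- A continuous function supported in `[a, b]` vanishes off the open interval `(a, b)`. -/
lemma eq_zero_of_notMem_Ioo {θ : ℝ → ℝ} (hθ : Continuous θ) {a b : ℝ}
    (hsupp : tsupport θ ⊆ Set.Icc a b) {x : ℝ} (hx : x ∉ Set.Ioo a b) : θ x = 0 := by
  by_contra h
  have hsub : Function.support θ ⊆ interior (Set.Icc a b) :=
    interior_maximal ((subset_tsupport θ).trans hsupp) hθ.isOpen_support
  rw [interior_Icc] at hsub
  exact hx (hsub h)

/-- Vectors that are dual to some coordinates are linearly independent. -/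
lemma linearIndependent_of_coord {K ι κ : Type*} [Field K] [Fintype ι] [DecidableEq ι]
    (v : ι → κ → K) (p : ι → κ) (h : ∀ t u, v t (p u) = if t = u then 1 else 0) :
    LinearIndependent K v := by
  rw [Fintype.linearIndependent_iff]
  intro g hg u
  simpa [h] using congrFun hg (p u)

/-- If `θ` vanishes at the nonzero integer multiples of `π`, then for `2n` successive generators
the rank at `-iπ` is at most `n`. -/
lemma rankθ_neg_mul_pi_le {θ : ℝ → ℝ} (hθ : ∀ k : ℤ, k ≠ 0 → θ (k * π) = 0)
    (i : ℤ) {r n : ℕ} (hn : r + 1 = 2 * n) :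
    rankθ θ (fun s : Fin (r + 1) => i + (s : ℕ)) (-(i * π)) ≤ n := by
  let e : Fin n → Fin (r + 1) → ℂ := fun t => Pi.single ⟨2 * t, by omega⟩ 1
  have hle : Submodule.span ℂ (Set.range fun j : ℤ => fun s : Fin (r + 1) =>
      (θ (-(i * π) + ((i + (s : ℕ) : ℤ) : ℝ) * π + 2 * j * π) : ℂ)) ≤
      Submodule.span ℂ (Set.range e) := by
    rw [Submodule.span_le]
    rintro _ ⟨j, rfl⟩
    have hval : ∀ s : Fin (r + 1), (s : ℤ) + 2 * j ≠ 0 →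
        θ (-(i * π) + ((i + (s : ℕ) : ℤ) : ℝ) * π + 2 * j * π) = 0 := by
      intro s hs
      rw [← hθ _ hs]
      congr 1
      push_cast
      ring
    by_cases hj : ∃ t : Fin n, (t : ℤ) + j = 0
    · obtain ⟨t, ht⟩ := hj
      refine Submodule.mem_span_range_iff_exists_fun ℂ |>.2 ⟨Pi.single t (θ 0 : ℂ), ?_⟩
      simp only [Pi.single_apply, ite_smul, zero_smul, Finset.sum_ite_eq',
        Finset.mem_univ, if_true]
      ext s
      by_cases hs : (s : ℤ) + 2 * j = 0
      · have hst : s = ⟨2 * t, by omega⟩ := by ext; simp only; omega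
        have harg : -(i * π) + ((i + (s : ℕ) : ℤ) : ℝ) * π + 2 * j * π = 0 := by
          have : ((s : ℕ) : ℝ) + 2 * j = 0 := by exact_mod_cast hs
          push_cast
          linear_combination π * this
        simp only [harg]
        simp [e, hst]
      · have hst : s ≠ ⟨2 * t, by omega⟩ := by
          rintro rfl
          apply hs
          simp only
          omega
        rw [hval s hs]
        simp [e, hst]
    · have hzero : (fun s : Fin (r + 1) =>
          (θ (-(i * π) + ((i + (s : ℕ) : ℤ) : ℝ) * π + 2 * j * π) : ℂ)) = 0 := by
        ext s
        rw [hval s fun hs => hj ⟨⟨s / 2, by omega⟩, by simp only; omega⟩, Complex.ofReal_zero,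
          Pi.zero_apply]
      simp only [hzero]
      exact Submodule.zero_mem _
  calc rankθ θ (fun s : Fin (r + 1) => i + (s : ℕ)) (-(i * π))
      ≤ Module.finrank ℂ (Submodule.span ℂ (Set.range e)) := Submodule.finrank_mono hle
    _ ≤ Fintype.card (Fin n) := finrank_range_le_card e
    _ = n := Fintype.card_fin n

/-- If `θ` is `1` at `±π/2` and vanishes at the other odd multiples of `π/2`, then for `2n`
successive generators the rank at `π/2 - iπ` is at least `n + 1`. -/
lemma le_rankθ_half_pi_sub {θ : ℝ → ℝ} (hpos : θ (π / 2) = 1) (hneg : θ (-(π / 2)) = 1)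
    (hθ : ∀ k : ℤ, k ≠ 0 → k ≠ -1 → θ (π / 2 + k * π) = 0)
    (i : ℤ) {r n : ℕ} (hn : r + 1 = 2 * n) :
    n + 1 ≤ rankθ θ (fun s : Fin (r + 1) => i + (s : ℕ)) (π / 2 - i * π) := by
  have hval : ∀ k : ℤ, θ (π / 2 + k * π) = if k = 0 ∨ k = -1 then 1 else 0 := by
    intro k
    split_ifs with hk
    · rcases hk with rfl | rfl
      · simpa using hpos
      · rw [← hneg]
        congr 1
        push_cast
        ring
    · exact hθ k (fun h => hk (Or.inl h)) (fun h => hk (Or.inr h))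
  let row : ℤ → Fin (r + 1) → ℂ := fun j s =>
    (θ (π / 2 - i * π + ((i + (s : ℕ) : ℤ) : ℝ) * π + 2 * j * π) : ℂ)
  have hrow : ∀ j s, row j s = if (s : ℤ) + 2 * j = 0 ∨ (s : ℤ) + 2 * j = -1 then 1 else 0 := by
    intro j s
    have harg : π / 2 - i * π + ((i + (s : ℕ) : ℤ) : ℝ) * π + 2 * j * π =
        π / 2 + ((s + 2 * j : ℤ) : ℝ) * π := by
      push_cast
      ring
    simp only [row]
    rw [harg, hval]
    split_ifs <;> simp
  let v : Fin (n + 1) → Fin (r + 1) → ℂ := fun t => row (-(t : ℤ))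
  have hv : LinearIndependent ℂ v := by
    refine linearIndependent_of_coord v (fun t => ⟨min (2 * t) r, by omega⟩) fun t u => ?_
    simp only [v, hrow]
    congr 1
    rw [Fin.ext_iff, eq_iff_iff]
    omega
  calc n + 1 = Fintype.card (Fin (n + 1)) := (Fintype.card_fin _).symm
    _ = Module.finrank ℂ (Submodule.span ℂ (Set.range v)) := (finrank_span_eq_card hv).symm
    _ ≤ Module.finrank ℂ (Submodule.span ℂ (Set.range row)) :=
        Submodule.finrank_mono (Submodule.span_mono (Set.range_comp_subset_range _ row))

/-- Lemma 5.1 a: for an even number `r+1` (`r` odd) of successive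
generators `φ_i, …, φ_{i+r}`, the rank of `[Φ̂(ξ+2jπ)_{j∈ℤ}]` is not constant in `ξ`. -/
theorem rank_not_constant_even_tuple (ε : ℝ) (hε : 0 < ε ∧ ε < 1/4)
    (θ : ℝ → ℝ) (hθs : ContDiff ℝ (⊤ : ℕ∞) θ) (hθ0 : ∀ x, 0 ≤ θ x)
    (hθ1 : ∀ x ∈ Set.Icc (-π + ε) (π - ε), θ x = 1)
    (hθsupp : tsupport θ ⊆ Set.Icc (-π) π)
    (i : ℤ) (r : ℕ) (hr : Odd r) :
    ¬ ∀ ξ₁ ξ₂ : ℝ,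
        rankθ θ (fun s : Fin (r + 1) => i + (s : ℕ)) ξ₁ =
          rankθ θ (fun s : Fin (r + 1) => i + (s : ℕ)) ξ₂ := by
  intro h
  obtain ⟨q, hq⟩ := hr
  have hn : r + 1 = 2 * (q + 1) := by omega
  have hπ := Real.pi_gt_three
  have hout : ∀ k : ℤ, ∀ a : ℝ, 0 ≤ a → a < π → k ≠ 0 → (k ≠ -1 ∨ a = 0) →
      θ (a + k * π) = 0 := by
    intro k a ha0 ha hk hk'
    refine eq_zero_of_notMem_Ioo hθs.continuous hθsupp fun hx => ?_
    obtain ⟨hx1, hx2⟩ := hx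
    rcases lt_or_gt_of_ne hk with hlt | hgt
    · rcases hk' with hk' | rfl
      · have : (k : ℝ) ≤ -2 := by exact_mod_cast (by omega : k ≤ -2)
        nlinarith
      · have : (k : ℝ) ≤ -1 := by exact_mod_cast (by omega : k ≤ -1)
        nlinarith
    · have : (1 : ℝ) ≤ k := by exact_mod_cast hgt
      nlinarith
  have hupper := rankθ_neg_mul_pi_le (θ := θ)
    (fun k hk => by simpa using hout k 0 le_rfl Real.pi_pos hk (Or.inr rfl)) i hn
  have hlower := le_rankθ_half_pi_sub (θ := θ)
    (hθ1 _ ⟨by linarith, by linarith⟩) (hθ1 _ ⟨by linarith, by linarith⟩)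
    (fun k hk hk' => hout k (π / 2) (by linarith) (by linarith) hk (Or.inl hk')) i hn
  rw [h (π / 2 - i * π) (-(i * π))] at hlower
  omega
end
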